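/- Up to isomorphism, the oddly (2)-bipancyclic graphs on v vertices with at most v + 4 edges are: exactly 2 of order 9, exactly 3 of order 15, exactly 8 of order 21, and exactly 4 of order 25; in particular every such graph has v ∈ {9, 15, 21, 25}. -/

import Mathlib

open SimpleGraph

/-- The number of cycles of length `k` in `G`, counted as subgraphs of `G`
isomorphic to the cycle graph `C_k`. -/
noncomputable def cycleCount {V : Type*} (G : SimpleGraph V) (k : ℕ) : ℕ :=
  {H : G.Subgraph | Nonempty (H.coe ≃g cycleGraph k)}.ncard

/-- A bipartite graph on an odd number `v` of vertices with minimum degree at least `2`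
is oddly `(r)`-bipancyclic if it contains precisely `r` cycles of each even length
from `4` to `v - 1`. -/
def IsOddlyRBipancyclic {V : Type*} [Fintype V] (G : SimpleGraph V) (r : ℕ) : Prop :=
  G.Colorable 2 ∧ Odd (Fintype.card V) ∧ (∀ x : V, 2 ≤ (G.neighborSet x).ncard) ∧
    ∀ k : ℕ, 4 ≤ k → k ≤ Fintype.card V - 1 → Even k → cycleCount G k = r

/-- There are, up to isomorphism, exactly `N` graphs on `v` vertices with at most
`b` edges satisfying the given pancyclicity property with parameter `r`. -/
def ExactlyNUpToIso (r N v b : ℕ) : Prop :=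
  ∃ Gs : Fin N → SimpleGraph (Fin v),
    (∀ i j : Fin N, i ≠ j → IsEmpty (Gs i ≃g Gs j)) ∧
    (∀ i : Fin N, IsOddlyRBipancyclic (Gs i) r ∧ (Gs i).edgeSet.ncard ≤ b) ∧
    (∀ (W : Type) [Fintype W] (G : SimpleGraph W), Fintype.card W = v →
      G.edgeSet.ncard ≤ b → IsOddlyRBipancyclic G r → ∃ i : Fin N, Nonempty (G ≃g Gs i))

/-!
The cycles of a graph are the circuits of its graphic matroid, that is, the minimal nonempty sets of
edges with zero boundary mod 2. An oddly (2)-bipancyclic graph on `n + 1` vertices has a cycle of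
length `n`, so it consists of a trail, which runs around this cycle and then to the last vertex, and
of at most four further edges.

Suppressing the vertices of degree two on the trail leaves finitely many types of graphs, in which
an edge of the trail stands for a path of unknown length. The circuits of a type do not depend on
these lengths. As the graph has two cycles of each even length from `4` to `n` and no odd ones, the
number of circuits determines `n`, and a search over the lengths is finite. Up to a rotation or
reflection of the cycle, every solution is one of the listed graphs. These are told apart by the
numbers of walks of length five from their vertices.
-/

namespace OddBipancyclic

open Finset symmDiff

section Boundary

variable {ι V : Type*} [DecidableEq V]

/-- The mod 2 sum of the two endpoints of an edge, as a chain on the vertices. -/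
def endpointSum : Sym2 V → V → ZMod 2 :=
  Sym2.lift ⟨fun a b => Pi.single a 1 + Pi.single b 1, fun _ _ => add_comm _ _⟩

theorem endpointSum_mk (a b : V) : endpointSum s(a, b) = Pi.single a 1 + Pi.single b 1 := rfl

theorem endpointSum_apply_of_notMem {v : V} {z : Sym2 V} (h : v ∉ z) : endpointSum z v = 0 := by
  induction z with
  | _ a b =>
    simp only [Sym2.mem_iff, not_or] at h
    simp [endpointSum_mk, h.1, h.2]

theorem endpointSum_apply_of_mem {v : V} {z : Sym2 V} (hz : ¬ z.IsDiag) (h : v ∈ z) :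
    endpointSum z v = 1 := by
  obtain ⟨w, rfl⟩ := h
  have hvw : v ≠ w := fun hvw => hz (Sym2.mk_isDiag_iff.mpr hvw)
  simp [endpointSum_mk, hvw]

/-- The mod 2 boundary of the set of edges `e i`, `i ∈ S`. The edges are indexed, so that parallel
edges are allowed. -/
def boundary (e : ι → Sym2 V) (S : Finset ι) : V → ZMod 2 := ∑ i ∈ S, endpointSum (e i)

variable {e : ι → Sym2 V} {S F : Finset ι} {i : ι}

theorem boundary_empty : boundary e ∅ = 0 := sum_empty

theorem boundary_singleton : boundary e {i} = endpointSum (e i) := sum_singleton _ _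

variable [DecidableEq ι]

theorem boundary_symmDiff : boundary e (S ∆ F) = boundary e S + boundary e F := by
  have hS := sum_inter_add_sum_sdiff S F fun i => endpointSum (e i)
  have hF := sum_inter_add_sum_sdiff F S fun i => endpointSum (e i)
  have hdisj : Disjoint (S \ F) (F \ S) := disjoint_sdiff_sdiff
  rw [boundary, symmDiff_def, sup_eq_union, sum_union hdisj, boundary, boundary, ← hS, ← hF,
    inter_comm F S, add_add_add_comm, ZModModule.add_self, zero_add]

end Boundary

section CycleGraph

variable {V : Type*} {l : ℕ}

theorem edgeSet_toSubgraph_cycleGraph {G : SimpleGraph V} (c : Copy (cycleGraph (l + 3)) G) :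
    c.toSubgraph.edgeSet = Set.range fun j => s(c j, c (j + 1)) := by
  ext z
  induction z with
  | _ x y =>
  simp only [Subgraph.mem_edgeSet, Subgraph.map_adj, Relation.map_apply, Subgraph.top_adj,
    cycleGraph_adj, Set.mem_range, Sym2.eq_iff]
  constructor
  · rintro ⟨i, j, hij | hij, rfl, rfl⟩
    · exact ⟨j, .inr ⟨rfl, congrArg c (sub_eq_iff_eq_add'.mp hij).symm⟩⟩
    · exact ⟨i, .inl ⟨rfl, congrArg c (sub_eq_iff_eq_add'.mp hij).symm⟩⟩
  · rintro ⟨i, ⟨rfl, rfl⟩ | ⟨rfl, rfl⟩⟩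
    · exact ⟨i, i + 1, .inr (by simp), rfl, rfl⟩
    · exact ⟨i + 1, i, .inl (by simp), rfl, rfl⟩

theorem toSubgraph_cycleGraph_injOn_edgeSet (G : SimpleGraph V) (l : ℕ) :
    Set.InjOn Subgraph.edgeSet
      (Set.range (Copy.toSubgraph : Copy (cycleGraph (l + 3)) G → G.Subgraph)) := by
  rintro _ ⟨c, rfl⟩ _ ⟨d, rfl⟩ h
  have hadj : c.toSubgraph.Adj = d.toSubgraph.Adj := by
    ext x y
    rw [← Subgraph.mem_edgeSet, h, Subgraph.mem_edgeSet]
  have hverts (c : Copy (cycleGraph (l + 3)) G) (x : V) :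
      x ∈ c.toSubgraph.verts ↔ ∃ y, c.toSubgraph.Adj x y := by
    refine ⟨?_, fun ⟨y, hy⟩ => c.toSubgraph.edge_vert hy⟩
    rintro ⟨i, -, rfl⟩
    refine ⟨c (i + 1), ?_⟩
    rw [← Subgraph.mem_edgeSet, edgeSet_toSubgraph_cycleGraph]
    exact ⟨i, rfl⟩
  refine Subgraph.ext ?_ hadj
  ext x
  rw [hverts, hverts, hadj]

theorem cycleCount_eq_ncard_range (G : SimpleGraph V) (k : ℕ) :
    cycleCount G k =
      (Set.range (Copy.toSubgraph : Copy (cycleGraph k) G → G.Subgraph)).ncard := by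
  rw [cycleCount, Copy.range_toSubgraph]
  exact congrArg Set.ncard (Set.ext fun H => ⟨fun ⟨f⟩ => ⟨f.symm⟩, fun ⟨f⟩ => ⟨f.symm⟩⟩)

end CycleGraph

section EdgeIndices

variable {ι V : Type*} {G : SimpleGraph V} {e : ι → Sym2 V} {T : Finset ι} {i : ι} {l : ℕ}
  {σ : Fin (l + 3) → ι}

theorem injective_of_cyclic_edges {φ : Fin (l + 3) → V} (hφ : φ.Injective)
    (he : ∀ j, e (σ j) = s(φ j, φ (j + 1))) : σ.Injective := by
  intro i j hij
  have h : s(φ i, φ (i + 1)) = s(φ j, φ (j + 1)) := by rw [← he, ← he, hij]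
  rcases Sym2.eq_iff.mp h with ⟨h, -⟩ | ⟨h, h'⟩
  · exact hφ h
  · have hi : j + 1 + 1 = j := by rw [← hφ h, hφ h']
    have htwo : (1 : Fin (l + 3)) + 1 = 0 := by simpa [add_assoc] using hi
    simp [Fin.ext_iff, Fin.val_add, Nat.mod_eq_of_lt] at htwo

open Classical in
/-- The indices of the edges of a subgraph, among the indices in `T`. -/
noncomputable def edgeIndices (e : ι → Sym2 V) (T : Finset ι) (H : G.Subgraph) : Finset ι :=
  {i ∈ T | e i ∈ H.edgeSet}

theorem mem_edgeIndices {H : G.Subgraph} : i ∈ edgeIndices e T H ↔ i ∈ T ∧ e i ∈ H.edgeSet := by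
  simp [edgeIndices]

theorem image_edgeIndices (hG : G.edgeSet = e '' T) (H : G.Subgraph) :
    e '' edgeIndices e T H = H.edgeSet := by
  ext z
  constructor
  · rintro ⟨i, hi, rfl⟩
    exact (mem_edgeIndices.mp hi).2
  · intro hz
    obtain ⟨i, hi, rfl⟩ := hG ▸ H.edgeSet_subset hz
    exact ⟨i, mem_edgeIndices.mpr ⟨hi, hz⟩, rfl⟩

theorem edgeIndices_toSubgraph [DecidableEq ι] (hinj : Set.InjOn e T)
    {c : Copy (cycleGraph (l + 3)) G} (hσT : ∀ j, σ j ∈ T) (hσ : ∀ j, e (σ j) = s(c j, c (j + 1))) :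
    edgeIndices e T c.toSubgraph = univ.image σ := by
  ext i
  simp only [mem_edgeIndices, edgeSet_toSubgraph_cycleGraph, Set.mem_range, ← hσ, mem_image,
    mem_univ, true_and]
  constructor
  · rintro ⟨hi, j, hj⟩
    exact ⟨j, hinj (hσT j) hi hj⟩
  · rintro ⟨j, rfl⟩
    exact ⟨hσT j, j, rfl⟩

end EdgeIndices

section Circuits

variable {ι V : Type*} [DecidableEq V] {e : ι → Sym2 V} {S T : Finset ι} {i : ι} {l : ℕ}

/-- The circuits of the graphic matroid with edges `e`, described as the minimal nonempty sets of
edges with zero boundary. -/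
def IsCircuit (e : ι → Sym2 V) (S : Finset ι) : Prop :=
  Minimal (fun F : Finset ι => F.Nonempty ∧ boundary e F = 0) S

theorem exists_isCircuit_subset (hS : S.Nonempty) (hS0 : boundary e S = 0) :
    ∃ C ⊆ S, IsCircuit e C :=
  exists_minimal_le_of_wellFoundedLT _ S ⟨hS, hS0⟩

theorem boundary_apply_of_unique {v : V} (hi : i ∈ S) (hdiag : ¬ (e i).IsDiag) (hv : v ∈ e i)
    (h : ∀ j ∈ S, j ≠ i → v ∉ e j) : boundary e S v = 1 := by
  rw [boundary, Finset.sum_apply, sum_eq_single_of_mem i hi fun j hj hji =>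
    endpointSum_apply_of_notMem (h j hj hji), endpointSum_apply_of_mem hdiag hv]

section CyclicSequence

variable [DecidableEq ι] {φ : Fin (l + 3) → V} {σ : Fin (l + 3) → ι}

theorem boundary_image_univ_eq_zero (hσ : σ.Injective) (he : ∀ j, e (σ j) = s(φ j, φ (j + 1))) :
    boundary e (univ.image σ) = 0 := by
  have hshift : ∑ j, (Pi.single (φ (j + 1)) 1 : V → ZMod 2) = ∑ j, Pi.single (φ j) 1 :=
    Equiv.sum_comp (Equiv.addRight (1 : Fin (l + 3))) fun j => (Pi.single (φ j) 1 : V → ZMod 2)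
  simp only [boundary, sum_image hσ.injOn, he, endpointSum_mk, sum_add_distrib, hshift,
    ZModModule.add_self]

theorem boundary_image_apply (hφ : φ.Injective) (hσ : σ.Injective)
    (he : ∀ j, e (σ j) = s(φ j, φ (j + 1))) (J : Finset (Fin (l + 3))) (j : Fin (l + 3)) :
    boundary e (J.image σ) (φ (j + 1)) =
      (if j + 1 ∈ J then 1 else 0) + (if j ∈ J then 1 else 0) := by
  simp [boundary, sum_image hσ.injOn, he, endpointSum_mk, Pi.single_apply, hφ.eq_iff,
    sum_add_distrib]

/-- Along a cycle, an even set of edges contains an edge if and only if it contains the next one. -/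
theorem isCircuit_image_univ (hφ : φ.Injective) (hσ : σ.Injective)
    (he : ∀ j, e (σ j) = s(φ j, φ (j + 1))) : IsCircuit e (univ.image σ) := by
  refine ⟨⟨univ_nonempty.image σ, boundary_image_univ_eq_zero hσ he⟩, ?_⟩
  rintro F ⟨hF, hF0⟩ hFle
  obtain ⟨J, -, rfl⟩ := subset_image_iff.mp hFle
  have hstep (j : Fin (l + 3)) : j + 1 ∈ J ↔ j ∈ J := by
    have := boundary_image_apply hφ hσ he J j
    rw [hF0, Pi.zero_apply] at this
    split_ifs at this <;> simp_all
  have hJ (j : Fin (l + 3)) : j ∈ J ↔ 0 ∈ J := by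
    induction j using Fin.induction with
    | zero => rfl
    | succ j ih => rw [← ih, ← Fin.coeSucc_eq_succ, hstep]
  obtain ⟨j, hj⟩ := image_nonempty.mp hF
  exact image_subset_image fun i _ => (hJ i).mpr ((hJ j).mp hj)

end CyclicSequence

section Finite

variable [Finite V]

/-- Otherwise the edges form a forest, which has a leaf, and the boundary does not vanish there. -/
theorem exists_copy_cycleGraph (hinj : Set.InjOn e S) (hdiag : ∀ i ∈ S, ¬ (e i).IsDiag)
    (hS : S.Nonempty) (hS0 : boundary e S = 0) :
    ∃ l, Nonempty (Copy (cycleGraph (l + 3)) (fromEdgeSet (e '' S))) := by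
  classical
  have := Fintype.ofFinite V
  set H := fromEdgeSet (e '' S)
  have hadj {v w : V} {i : ι} (hi : i ∈ S) (he : e i = s(v, w)) : H.Adj v w :=
    (fromEdgeSet_adj _).mpr ⟨⟨i, hi, he⟩, fun h => hdiag i hi (he ▸ Sym2.mk_isDiag_iff.mpr h)⟩
  by_contra hfree
  have hH_acyclic : H.IsAcyclic := by
    rw [isAcyclic_iff_free_cycleGraph]
    rintro n hn ⟨c⟩
    obtain ⟨l, rfl⟩ := Nat.exists_eq_add_of_le' hn
    exact hfree ⟨l, ⟨c⟩⟩
  obtain ⟨i, hi⟩ := hS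
  induction hei : e i with
  | _ x y =>
  let C := H.connectedComponentMk x
  have hxy : H.Adj x y := hadj hi hei
  have hC : Nontrivial C :=
    ⟨⟨⟨x, rfl⟩, ⟨y, (ConnectedComponent.eq.mpr hxy.reachable).symm⟩,
      fun h => hxy.ne (congrArg Subtype.val h)⟩⟩
  obtain ⟨v, hv⟩ := (hH_acyclic.isTree_connectedComponent C).exists_vert_degree_one_of_nontrivial
  obtain ⟨w, hvw : H.Adj v w, hw⟩ := degree_eq_one_iff_existsUnique_adj.mp hv
  obtain ⟨⟨j, hj, hej⟩, -⟩ := (fromEdgeSet_adj _).mp hvw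
  have huniq (k : ι) (hk : k ∈ S) (hkj : k ≠ j) : ↑v ∉ e k := by
    rintro ⟨u, hu⟩
    have hvu : H.Adj v u := hadj hk hu
    have huC : u ∈ C.supp :=
      (ConnectedComponent.eq.mpr hvu.symm.reachable).trans v.2
    have huw : u = w := congrArg Subtype.val (hw ⟨u, huC⟩ hvu)
    exact hkj (hinj hk hj (by rw [hej, hu, huw]))
  have := boundary_apply_of_unique hj (hdiag j hj) (hej ▸ Sym2.mem_mk_left _ _) huniq
  simp [hS0] at this

theorem IsCircuit.exists_cyclic_edges [DecidableEq ι] (hS : IsCircuit e S) (hinj : Set.InjOn e S)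
    (hdiag : ∀ i ∈ S, ¬ (e i).IsDiag) :
    ∃ l, ∃ (φ : Fin (l + 3) → V) (σ : Fin (l + 3) → ι), φ.Injective ∧ σ.Injective ∧
      (∀ j, e (σ j) = s(φ j, φ (j + 1))) ∧ univ.image σ = S := by
  obtain ⟨l, ⟨c⟩⟩ := exists_copy_cycleGraph hinj hdiag hS.prop.1 hS.prop.2
  have hedge (j : Fin (l + 3)) : ∃ i ∈ S, e i = s(c j, c (j + 1)) := by
    have hj : (cycleGraph (l + 3)).Adj j (j + 1) := cycleGraph_adj.mpr (.inr (by simp))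
    exact ((fromEdgeSet_adj _).mp (c.toHom.map_adj hj)).1
  choose σ hσS hσ using hedge
  have hσinj := injective_of_cyclic_edges c.injective hσ
  refine ⟨l, c, σ, c.injective, hσinj, hσ, ?_⟩
  have hle : univ.image σ ⊆ S := image_subset_iff.mpr fun j _ => hσS j
  exact (Minimal.eq_of_le hS (isCircuit_image_univ c.injective hσinj hσ).prop hle)

end Finite

section CycleCount

variable {G : SimpleGraph V}

theorem isCircuit_edgeIndices (hinj : Set.InjOn e T) (hG : G.edgeSet = e '' T)
    (c : Copy (cycleGraph (l + 3)) G) :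
    IsCircuit e (edgeIndices e T c.toSubgraph) ∧ #(edgeIndices e T c.toSubgraph) = l + 3 := by
  classical
  have hex (j : Fin (l + 3)) : ∃ i ∈ T, e i = s(c j, c (j + 1)) := by
    have hj : s(c j, c (j + 1)) ∈ c.toSubgraph.edgeSet := by
      rw [edgeSet_toSubgraph_cycleGraph]
      exact ⟨j, rfl⟩
    exact (Set.mem_image _ _ _).mp (hG ▸ c.toSubgraph.edgeSet_subset hj)
  choose σ hσT hσ using hex
  have hσinj := injective_of_cyclic_edges c.injective hσ
  rw [edgeIndices_toSubgraph hinj hσT hσ, card_image_of_injective _ hσinj, card_univ,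
    Fintype.card_fin]
  exact ⟨isCircuit_image_univ c.injective hσinj hσ, rfl⟩

theorem exists_copy_of_isCircuit [Finite V] (hinj : Set.InjOn e T) (hG : G.edgeSet = e '' T)
    (hST : S ⊆ T) (hS : IsCircuit e S) (hcard : #S = l + 3) :
    ∃ c : Copy (cycleGraph (l + 3)) G, edgeIndices e T c.toSubgraph = S := by
  classical
  obtain ⟨m, φ, σ, hφ, hσinj, hσ, rfl⟩ := hS.exists_cyclic_edges (hinj.mono hST) fun i hi =>
    G.not_isDiag_of_mem_edgeSet (hG ▸ Set.mem_image_of_mem e (hST hi))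
  obtain rfl : m = l := by simpa [card_image_of_injective _ hσinj] using hcard
  have hσT (j : Fin (m + 3)) : σ j ∈ T := hST (mem_image_of_mem σ (mem_univ j))
  have hφG (j : Fin (m + 3)) : G.Adj (φ j) (φ (j + 1)) := by
    rw [← mem_edgeSet, hG]
    exact ⟨σ j, hσT j, hσ j⟩
  have hhom {i j : Fin (m + 3)} (hij : (cycleGraph (m + 3)).Adj i j) : G.Adj (φ i) (φ j) := by
    rcases cycleGraph_adj.mp hij with hij | hij <;> obtain rfl := sub_eq_iff_eq_add'.mp hij
    · exact (hφG j).symm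
    · exact hφG i
  exact ⟨⟨⟨φ, hhom⟩, hφ⟩, edgeIndices_toSubgraph hinj hσT hσ⟩

theorem cycleCount_eq_ncard_isCircuit [Finite V] (hinj : Set.InjOn e T) (hG : G.edgeSet = e '' T)
    {k : ℕ} (hk : 3 ≤ k) : cycleCount G k = {S | S ⊆ T ∧ IsCircuit e S ∧ #S = k}.ncard := by
  obtain ⟨l, rfl⟩ := Nat.exists_eq_add_of_le' hk
  rw [cycleCount_eq_ncard_range]
  refine Set.ncard_congr (fun H _ => edgeIndices e T H) ?_ ?_ ?_
  · rintro _ ⟨c, rfl⟩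
    exact ⟨fun i hi => (mem_edgeIndices.mp hi).1, isCircuit_edgeIndices hinj hG c⟩
  · intro H H' hH hH' h
    exact toSubgraph_cycleGraph_injOn_edgeSet G l hH hH'
      (by rw [← image_edgeIndices hG, h, image_edgeIndices hG])
  · rintro S ⟨hST, hS, hcard⟩
    obtain ⟨c, hc⟩ := exists_copy_of_isCircuit hinj hG hST hS hcard
    exact ⟨c.toSubgraph, ⟨c, rfl⟩, hc⟩

theorem IsCircuit.three_le_card [Finite V] (hS : IsCircuit e S) (hinj : Set.InjOn e S)
    (hdiag : ∀ i ∈ S, ¬ (e i).IsDiag) : 3 ≤ #S := by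
  classical
  obtain ⟨l, φ, σ, -, hσ, -, rfl⟩ := hS.exists_cyclic_edges hinj hdiag
  simp [card_image_of_injective _ hσ]

end CycleCount

end Circuits

section Insert

variable {ι V : Type*} [DecidableEq V] {e : ι → Sym2 V} {S T D : Finset ι} {i : ι}

/-- `S` belongs to the cycle space of the edges `e i`, `i ∈ T`. -/
def IsEvenIn (e : ι → Sym2 V) (T S : Finset ι) : Prop := S ⊆ T ∧ boundary e S = 0

/-- `S` is a circuit of the edges `e i`, `i ∈ T`. -/
def IsCircuitIn (e : ι → Sym2 V) (T S : Finset ι) : Prop := S ⊆ T ∧ IsCircuit e S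

theorem IsCircuitIn.isEvenIn (hS : IsCircuitIn e T S) : IsEvenIn e T S := ⟨hS.1, hS.2.prop.2⟩

theorem isCircuitIn_congr {T' : Finset ι} (h : ∀ S, IsEvenIn e T S ↔ IsEvenIn e T' S) :
    IsCircuitIn e T S ↔ IsCircuitIn e T' S :=
  ⟨fun hS => ⟨((h S).mp hS.isEvenIn).1, hS.2⟩, fun hS => ⟨((h S).mpr hS.isEvenIn).1, hS.2⟩⟩

variable [DecidableEq ι]

theorem isEvenIn_insert (hiD : i ∈ D) (hD : IsEvenIn e (insert i T) D) :
    IsEvenIn e (insert i T) S ↔ IsEvenIn e T S ∨ ∃ F, IsEvenIn e T F ∧ D ∆ F = S := by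
  constructor
  · rintro ⟨hS, hS0⟩
    by_cases hiS : i ∈ S
    · refine .inr ⟨D ∆ S, ⟨?_, by rw [boundary_symmDiff, hD.2, hS0, add_zero]⟩,
        symmDiff_symmDiff_cancel_left _ _⟩
      have hi' : i ∉ D ∆ S := by simp [mem_symmDiff, hiS, hiD]
      rw [← subset_insert_iff_of_notMem hi']
      exact symmDiff_le_sup.trans (sup_le hD.1 hS)
    · exact .inl ⟨(subset_insert_iff_of_notMem hiS).mp hS, hS0⟩
  · rintro (⟨hS, hS0⟩ | ⟨F, ⟨hF, hF0⟩, rfl⟩)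
    · exact ⟨hS.trans (subset_insert _ _), hS0⟩
    · exact ⟨symmDiff_le_sup.trans (sup_le hD.1 (hF.trans (subset_insert _ _))),
        by rw [boundary_symmDiff, hD.2, hF0, add_zero]⟩

theorem mem_symmDiff_of_isEvenIn {F : Finset ι} (hi : i ∉ T) (hiD : i ∈ D) (hF : IsEvenIn e T F) :
    i ∈ D ∆ F :=
  mem_symmDiff.mpr (.inl ⟨hiD, fun h => hi (hF.1 h)⟩)

/-- If two even sets containing `i` are nested, their difference is an even subset of `T`. -/
theorem isCircuit_iff_of_mem (hS : IsEvenIn e (insert i T) S) (hi : i ∉ T) (hiS : i ∈ S) :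
    IsCircuit e S ↔ ∀ C, IsCircuitIn e T C → ¬ C ⊆ S := by
  constructor
  · rintro hcirc C hC hCS
    exact hi (hC.1 (hcirc.2 hC.2.prop hCS hiS))
  · refine fun h => ⟨⟨⟨i, hiS⟩, hS.2⟩, fun F ⟨hF, hF0⟩ hFS => ?_⟩
    have hsmall {R : Finset ι} (hRS : R ⊆ S) (hR0 : boundary e R = 0) (hiR : i ∉ R) : R = ∅ := by
      by_contra hR
      obtain ⟨C, hCR, hC⟩ := exists_isCircuit_subset (nonempty_iff_ne_empty.mpr hR) hR0
      have hRT : R ⊆ T := (subset_insert_iff_of_notMem hiR).mp (hRS.trans hS.1)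
      exact h C ⟨hCR.trans hRT, hC⟩ (hCR.trans hRS)
    have hiF : i ∈ F := by_contra fun hiF => hF.ne_empty (hsmall hFS hF0 hiF)
    have hdiff : S ∆ F = ∅ := hsmall (symmDiff_le_sup.trans (sup_le le_rfl hFS))
      (by rw [boundary_symmDiff, hS.2, hF0, add_zero]) (by simp [mem_symmDiff, hiS, hiF])
    exact (symmDiff_eq_bot.mp hdiff).le

theorem isCircuitIn_insert (hi : i ∉ T) (hiD : i ∈ D) (hD : IsEvenIn e (insert i T) D) :
    IsCircuitIn e (insert i T) S ↔ IsCircuitIn e T S ∨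
      ∃ F, IsEvenIn e T F ∧ D ∆ F = S ∧ ∀ C, IsCircuitIn e T C → ¬ C ⊆ S := by
  have hmem {F : Finset ι} (hF : IsEvenIn e T F) : i ∈ D ∆ F :=
    mem_symmDiff_of_isEvenIn hi hiD hF
  constructor
  · intro hS
    rcases (isEvenIn_insert hiD hD).mp hS.isEvenIn with h | ⟨F, hF, rfl⟩
    · exact .inl ⟨h.1, hS.2⟩
    · exact .inr ⟨F, hF, rfl, (isCircuit_iff_of_mem hS.isEvenIn hi (hmem hF)).mp hS.2⟩
  · rintro (hS | ⟨F, hF, rfl, h⟩)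
    · exact ⟨hS.1.trans (subset_insert _ _), hS.2⟩
    · have hS := (isEvenIn_insert hiD hD).mpr (.inr ⟨F, hF, rfl⟩)
      exact ⟨hS.1, (isCircuit_iff_of_mem hS hi (hmem hF)).mpr h⟩

theorem isEvenIn_insert_pendant {v : V} (hv : v ∈ e i) (hdiag : ¬ (e i).IsDiag)
    (hT : ∀ j ∈ T, v ∉ e j) : IsEvenIn e (insert i T) S ↔ IsEvenIn e T S := by
  refine ⟨fun ⟨hS, hS0⟩ => ⟨fun j hj => ?_, hS0⟩, fun hS => ⟨hS.1.trans (subset_insert _ _), hS.2⟩⟩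
  refine mem_of_mem_insert_of_ne (hS hj) ?_
  rintro rfl
  have := boundary_apply_of_unique hj hdiag hv fun k hk hkj =>
    hT k (mem_of_mem_insert_of_ne (hS hk) hkj)
  simp [hS0] at this

end Insert

section Enumerates

variable {α : Type*} {L : List α} {P Q : α → Prop}

/-- `L` lists, without repetition, the elements satisfying `P`. -/
def Enumerates (L : List α) (P : α → Prop) : Prop := L.Nodup ∧ ∀ a, a ∈ L ↔ P a

theorem Enumerates.congr (h : Enumerates L P) (hPQ : ∀ a, P a ↔ Q a) : Enumerates L Q :=
  ⟨h.1, fun a => (h.2 a).trans (hPQ a)⟩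

variable {ι V : Type*} [DecidableEq ι] [DecidableEq V] {e : ι → Sym2 V} {T D : Finset ι} {i : ι}
  {evens circuits : List (Finset ι)}

theorem Enumerates.evens_insert (h : Enumerates evens (IsEvenIn e T)) (hi : i ∉ T) (hiD : i ∈ D)
    (hD : IsEvenIn e (insert i T) D) :
    Enumerates (evens ++ evens.map (D ∆ ·)) (IsEvenIn e (insert i T)) := by
  refine ⟨h.1.append (h.1.map (symmDiff_right_injective D)) ?_, fun S => ?_⟩
  · intro S hS hS'
    obtain ⟨F, hF, rfl⟩ := List.mem_map.mp hS'
    exact hi (((h.2 _).mp hS).1 (mem_symmDiff_of_isEvenIn hi hiD ((h.2 F).mp hF)))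
  · simp [isEvenIn_insert hiD hD, h.2]

theorem Enumerates.circuits_insert (hE : Enumerates evens (IsEvenIn e T))
    (hC : Enumerates circuits (IsCircuitIn e T)) (hi : i ∉ T) (hiD : i ∈ D)
    (hD : IsEvenIn e (insert i T) D) :
    Enumerates ((evens.map (D ∆ ·)).filter (fun S => ∀ C ∈ circuits, ¬ C ⊆ S) ++ circuits)
      (IsCircuitIn e (insert i T)) := by
  refine ⟨((hE.1.map (symmDiff_right_injective D)).filter _).append hC.1 ?_, fun S => ?_⟩
  · intro S hS hS'
    obtain ⟨F, hF, rfl⟩ := List.mem_map.mp (List.mem_of_mem_filter hS)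
    exact hi (((hC.2 _).mp hS').1 (mem_symmDiff_of_isEvenIn hi hiD ((hE.2 F).mp hF)))
  · simp only [isCircuitIn_insert hi hiD hD, List.mem_append, List.mem_filter, List.mem_map, hE.2,
      hC.2, decide_eq_true_eq]
    grind

end Enumerates

section Trail

variable {n i p : ℕ} {E : List (ℕ × ℕ)} {S : Finset ℕ}

/-- The vertex at position `p` of the trail `0, 1, …, n - 1, 0, n` through all `n + 1` vertices,
which runs once around a cycle of length `n` and then steps to the remaining vertex `n`. Positions
run from `0` to `n + 1`. -/
def vertex (n p : ℕ) : Fin (n + 1) := Fin.ofNat (n + 1) (if p = n then 0 else min p n)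

/-- The edges of the trail, followed by the edges joining the pairs `E` of positions. -/
def edges (n : ℕ) (E : List (ℕ × ℕ)) : List (Sym2 (Fin (n + 1))) :=
  ((List.range (n + 1)).map (fun i => (i, i + 1)) ++ E).map
    fun c : ℕ × ℕ => s(vertex n c.1, vertex n c.2)

/-- The edge number `i` in `edges n E`, with a junk value for `i` out of range. -/
def edge (n : ℕ) (E : List (ℕ × ℕ)) (i : ℕ) : Sym2 (Fin (n + 1)) := (edges n E).getD i s(0, 0)

theorem length_edges : (edges n E).length = n + 1 + E.length := by simp [edges]

theorem image_edge : edge n E '' range (n + 1 + E.length) = {e | e ∈ edges n E} := by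
  ext e
  simp only [Set.mem_image, mem_coe, mem_range, Set.mem_ofPred_eq, ← length_edges, edge,
    List.mem_iff_getElem]
  exact ⟨fun ⟨i, hi, h⟩ => ⟨i, hi, by rw [← h, List.getD_eq_getElem _ _ hi]⟩,
    fun ⟨i, hi, h⟩ => ⟨i, hi, by rw [← h, List.getD_eq_getElem _ _ hi]⟩⟩

theorem edge_injOn (h : (edges n E).Nodup) :
    Set.InjOn (edge n E) (range (n + 1 + E.length)) := by
  intro i hi j hj hij
  rw [mem_coe, mem_range, ← length_edges] at hi hj
  rw [edge, edge, List.getD_eq_getElem _ _ hi, List.getD_eq_getElem _ _ hj] at hij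
  exact (h.getElem_inj_iff).mp hij

theorem vertex_val : (vertex n p : ℕ) = if p = n then 0 else min p n := by
  unfold vertex
  simp only [Fin.val_ofNat]
  split_ifs
  · exact Nat.zero_mod _
  · exact Nat.mod_eq_of_lt (by omega)

theorem vertex_val_of_lt (h : p < n) : (vertex n p : ℕ) = p := by
  rw [vertex_val, if_neg h.ne, min_eq_left h.le]

theorem vertex_self : vertex n n = 0 := by simp [vertex]

theorem vertex_last : (vertex n (n + 1) : ℕ) = n := by simp [vertex]

theorem edge_of_le (h : i ≤ n) : edge n E i = s(vertex n i, vertex n (i + 1)) := by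
  simp [edge, edges, List.getElem?_append, Nat.lt_succ_iff.mpr h]

theorem edge_add {c : ℕ × ℕ} {t : ℕ} (ht : E[t]? = some c) :
    edge n E (n + 1 + t) = s(vertex n c.1, vertex n c.2) := by
  simp [edge, edges, List.getElem?_append, ht, show ¬ n + 1 + t ≤ n by omega]

theorem boundary_range (h : p ≤ n + 1) :
    boundary (edge n E) (range p) = Pi.single (vertex n 0) 1 + Pi.single (vertex n p) 1 := by
  induction p with
  | zero => rw [range_zero, boundary_empty, ZModModule.add_self]
  | succ p ih =>
    rw [boundary, sum_range_succ, ← boundary, ih (by omega), edge_of_le (by omega), endpointSum_mk,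
      add_assoc, ← add_assoc (Pi.single (vertex n p) 1), ZModModule.add_self, zero_add]

theorem isEvenIn_range_of_lt (h : i < n) :
    IsEvenIn (edge n E) (range i) S ↔ S = ∅ := by
  induction i with
  | zero => simp +contextual [IsEvenIn, boundary_empty]
  | succ i ih =>
    have hval (p : ℕ) (hp : p ≤ i + 1) : (vertex n p : ℕ) = p := vertex_val_of_lt (by omega)
    rw [range_add_one, isEvenIn_insert_pendant (v := vertex n (i + 1)), ih (by omega)]
    · rw [edge_of_le (by omega)]
      exact Sym2.mem_mk_right _ _
    · rw [edge_of_le (by omega), Sym2.mk_isDiag_iff, Fin.ext_iff, hval _ (by omega), hval _ le_rfl]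
      omega
    · intro j hj
      rw [mem_range] at hj
      rw [edge_of_le (by omega), Sym2.mem_iff, Fin.ext_iff, Fin.ext_iff, hval _ le_rfl,
        hval _ (by omega), hval _ (by omega)]
      omega

theorem isEvenIn_range_succ (hn : 0 < n) :
    IsEvenIn (edge n E) (range (n + 1)) S ↔ IsEvenIn (edge n E) (range n) S := by
  have hlast {p : ℕ} (hp : p ≤ n) : (vertex n (n + 1) : ℕ) ≠ vertex n p := by
    rw [vertex_last]
    rcases hp.lt_or_eq with hp | rfl
    · rw [vertex_val_of_lt hp]
      exact hp.ne'
    · simpa [vertex_self] using hn.ne'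
  rw [range_add_one, isEvenIn_insert_pendant (v := vertex n (n + 1))]
  · rw [edge_of_le le_rfl]
    exact Sym2.mem_mk_right _ _
  · rw [edge_of_le le_rfl, Sym2.mk_isDiag_iff, Fin.ext_iff]
    exact (hlast le_rfl).symm
  · intro j hj
    rw [mem_range] at hj
    rw [edge_of_le hj.le, Sym2.mem_iff, Fin.ext_iff, Fin.ext_iff]
    exact not_or.mpr ⟨hlast hj.le, hlast hj⟩

theorem boundary_range_self : boundary (edge n E) (range n) = 0 := by
  rw [boundary_range n.le_succ, vertex_self]
  rcases n.eq_zero_or_pos with rfl | hn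
  · exact ZModModule.add_self _
  · rw [show vertex n 0 = 0 from Fin.ext (vertex_val_of_lt hn), ZModModule.add_self]

theorem enumerates_trail (hn : 0 < n) :
    Enumerates [∅, range n] (IsEvenIn (edge n E) (range (n + 1))) ∧
      Enumerates [range n] (IsCircuitIn (edge n E) (range (n + 1))) := by
  obtain ⟨m, rfl⟩ := Nat.exists_eq_succ_of_ne_zero hn.ne'
  have hpath : Enumerates [∅] (IsEvenIn (edge (m + 1) E) (range m)) :=
    ⟨List.nodup_singleton _, fun S => by simp [isEvenIn_range_of_lt]⟩
  have hacyclic : Enumerates [] (IsCircuitIn (edge (m + 1) E) (range m)) := by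
    refine ⟨List.nodup_nil, fun S => ?_⟩
    simp only [List.not_mem_nil, false_iff]
    intro hS
    exact hS.2.prop.1.ne_empty ((isEvenIn_range_of_lt m.lt_succ_self).mp hS.isEvenIn)
  have hD : IsEvenIn (edge (m + 1) E) (insert m (range m)) (range (m + 1)) :=
    ⟨range_add_one.le, boundary_range_self⟩
  have heq (S : Finset ℕ) := (isEvenIn_range_succ (E := E) (S := S) hn).symm
  have hevens := hpath.evens_insert notMem_range_self (self_mem_range_succ m) hD
  have hcircuits := hpath.circuits_insert hacyclic notMem_range_self (self_mem_range_succ m) hD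
  rw [← range_add_one] at hevens hcircuits
  refine ⟨?_, ?_⟩
  · simpa [symmDiff_def] using hevens.congr heq
  · simpa [symmDiff_def] using hcircuits.congr fun S => isCircuitIn_congr heq

theorem isEvenIn_fundamental {c : ℕ × ℕ} {t : ℕ} (ht : E[t]? = some c) (h₁ : c.1 ≤ n + 1)
    (h₂ : c.2 ≤ n + 1) :
    IsEvenIn (edge n E) (insert (n + 1 + t) (range (n + 1 + t)))
      (range c.1 ∆ range c.2 ∆ {n + 1 + t}) := by
  constructor
  · rw [← range_add_one]
    refine symmDiff_le_sup.trans (sup_le (symmDiff_le_sup.trans (sup_le ?_ ?_)) ?_)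
    · exact range_subset_range.mpr (by omega)
    · exact range_subset_range.mpr (by omega)
    · simp
  · rw [boundary_symmDiff, boundary_symmDiff, boundary_range h₁, boundary_range h₂,
      boundary_singleton, edge_add ht, endpointSum_mk, add_add_add_comm]
    simp only [add_assoc, ZModModule.add_self, add_zero]

end Trail

section Expand

variable {pos : ℕ → ℕ} {S T : Finset ℕ} {i : ℕ}

/-- The set of edges of a subdivision that come from the edges `i ∈ S` of the original graph, when
the `i`-th edge is subdivided into the edges numbered `pos i, …, pos (i + 1) - 1`. -/
def expand (pos : ℕ → ℕ) (S : Finset ℕ) : Finset ℕ :=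
  S.biUnion fun i => Ico (pos i) (pos (i + 1))

theorem expand_range (hpos : StrictMono pos) (h0 : pos 0 = 0) :
    expand pos (range i) = range (pos i) := by
  induction i with
  | zero => simp [expand, h0]
  | succ i ih =>
    have : pos i < pos (i + 1) := hpos i.lt_succ_self
    rw [expand, range_add_one, biUnion_insert, ← expand, ih]
    ext j
    simp only [mem_union, mem_Ico, mem_range]
    omega

theorem expand_singleton (h : pos (i + 1) = pos i + 1) : expand pos {i} = {pos i} := by
  simp [expand, h]

theorem disjoint_Ico_of_ne (hpos : Monotone pos) {j : ℕ} (h : i ≠ j) :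
    Disjoint (Ico (pos i) (pos (i + 1))) (Ico (pos j) (pos (j + 1))) :=
  (disjoint_coe.mp (by simpa using hpos.pairwise_disjoint_on_Ico_succ h))

theorem mem_expand (hpos : Monotone pos) {j : ℕ} (hj : j ∈ Ico (pos i) (pos (i + 1))) :
    j ∈ expand pos S ↔ i ∈ S := by
  refine ⟨fun h => ?_, fun h => mem_biUnion.mpr ⟨i, h, hj⟩⟩
  obtain ⟨i', hi', hj'⟩ := mem_biUnion.mp h
  by_contra hi
  refine disjoint_left.mp (disjoint_Ico_of_ne hpos ?_) hj hj'
  rintro rfl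
  exact hi hi'

theorem expand_subset_iff (hpos : StrictMono pos) : expand pos S ⊆ expand pos T ↔ S ⊆ T := by
  refine ⟨fun h i hi => ?_, biUnion_subset_biUnion_of_subset_left _⟩
  have hmem : pos i ∈ Ico (pos i) (pos (i + 1)) := left_mem_Ico.mpr (hpos i.lt_succ_self)
  exact (mem_expand hpos.monotone hmem).mp (h ((mem_expand hpos.monotone hmem).mpr hi))

theorem expand_symmDiff (hpos : StrictMono pos) :
    expand pos (S ∆ T) = expand pos S ∆ expand pos T := by
  ext j
  by_cases hj : ∃ i, j ∈ Ico (pos i) (pos (i + 1))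
  · obtain ⟨i, hi⟩ := hj
    simp only [mem_symmDiff, mem_expand hpos.monotone hi]
  · have hnot {S : Finset ℕ} : j ∉ expand pos S := fun h =>
      hj ((mem_biUnion.mp h).imp fun _ hi => hi.2)
    simp only [mem_symmDiff, hnot, false_and, or_self]

theorem card_expand (hpos : StrictMono pos) : #(expand pos S) = ∑ i ∈ S, (pos (i + 1) - pos i) := by
  rw [expand, card_biUnion fun i _ j _ h => disjoint_Ico_of_ne hpos.monotone h]
  simp

end Expand

section Pack

variable {w : ℕ → ℕ} {A B : Finset ℕ} {m : ℕ}

/-- The number whose base-256 digit at `i` is `w i` if `i ∈ A`, and `0` otherwise. -/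
def pack (w : ℕ → ℕ) (A : Finset ℕ) : ℕ := ∑ i ∈ A, w i * 256 ^ i

/-- The encoding of a set `A` of natural numbers by a mask that keeps the base-256 digits
with index in `A`. -/
def code (A : Finset ℕ) : ℕ := pack (fun _ => 255) A

theorem pack_lt (hw : ∀ i, w i < 256) (hA : ∀ i ∈ A, i < m) : pack w A < 256 ^ m := by
  induction A using Finset.induction_on_max generalizing m with
  | empty => simp [pack]
  | insert a A ha ih =>
    rw [pack, sum_insert fun h => (ha a h).false, ← pack]
    calc w a * 256 ^ a + pack w A < w a * 256 ^ a + 256 ^ a := by gcongr; exact ih ha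
      _ = (w a + 1) * 256 ^ a := by ring
      _ ≤ 256 * 256 ^ a := by gcongr; exact hw a
      _ = 256 ^ (a + 1) := by ring
      _ ≤ 256 ^ m := Nat.pow_le_pow_right (by norm_num) (hA a (mem_insert_self _ _))

theorem testBit_pack (hw : ∀ i, w i < 256) :
    (pack w A).testBit m = (decide (m / 8 ∈ A) && (w (m / 8)).testBit (m % 8)) := by
  induction A using Finset.induction_on_max with
  | empty => simp [pack]
  | insert a A ha ih =>
    have hlt : pack w A < 2 ^ (8 * a) := by simpa [pow_mul] using pack_lt hw ha
    rw [pack, sum_insert fun h => (ha a h).false, ← pack, mul_comm,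
      show 256 ^ a = 2 ^ (8 * a) by simp [pow_mul], Nat.testBit_two_pow_mul_add _ hlt, ih]
    have hA : m / 8 ∈ A → m / 8 < a := ha _
    split_ifs with hm
    · simp [show m / 8 ≠ a by omega]
    · have hnot : m / 8 ∉ A := fun h => by have := hA h; omega
      by_cases hma : m / 8 = a
      · subst hma
        simp [show m - 8 * (m / 8) = m % 8 by omega]
      · have : w a < 2 ^ (m - 8 * a) :=
          (hw a).trans_le (Nat.pow_le_pow_right two_pos (by omega : 8 ≤ m - 8 * a))
        simp [hma, hnot, Nat.testBit_lt_two_pow this]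

theorem testBit_code : (code A).testBit m = decide (m / 8 ∈ A) := by
  rw [code, testBit_pack fun _ => by norm_num, show 255 = 2 ^ 8 - 1 from rfl,
    Nat.testBit_two_pow_sub_one]
  simp [Nat.mod_lt]

theorem code_symmDiff : code (A ∆ B) = code A ^^^ code B := by
  refine Nat.eq_of_testBit_eq fun m => ?_
  simp only [Nat.testBit_xor, testBit_code, mem_symmDiff]
  by_cases m / 8 ∈ A <;> by_cases m / 8 ∈ B <;> simp [*]

theorem pack_land_code (hw : ∀ i, w i < 256) : pack w A &&& code B = pack w (A ∩ B) := by
  refine Nat.eq_of_testBit_eq fun m => ?_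
  simp only [Nat.testBit_and, testBit_code, testBit_pack hw, mem_inter, Bool.decide_and]
  ac_rfl

theorem code_land : code A &&& code B = code (A ∩ B) := pack_land_code fun _ => by norm_num

theorem code_injective : code.Injective := fun A B h => by
  ext i
  simpa [testBit_code] using congrArg (Nat.testBit · (8 * i)) h

theorem code_eq_zero : code A = 0 ↔ A = ∅ := by
  rw [← code_injective.eq_iff]
  simp [code, pack]

theorem code_range : code (range m) = 256 ^ m - 1 := by
  rw [code, pack, ← mul_sum, mul_comm]
  exact Nat.eq_sub_of_add_eq (geom_sum_mul_add 255 m)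

theorem code_singleton : code {m} = 255 * 256 ^ m := sum_singleton _ _

theorem code_land_eq_left : code A &&& code B = code A ↔ A ⊆ B := by
  rw [code_land, code_injective.eq_iff, inter_eq_left]

theorem pack_mod : pack w A % 255 = (∑ i ∈ A, w i) % 255 := by
  refine Nat.ModEq.sum fun i _ => ?_
  simpa using (Nat.ModEq.pow i (show 256 ≡ 1 [MOD 255] from rfl)).mul_left (w i)

theorem code_sdiff (h : B ⊆ A) : code (A \ B) = code A - code B :=
  Nat.eq_sub_of_add_eq (sum_sdiff h)

end Pack

section Evaluation

variable {α : Type*}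

/-- `f x`, written so that the kernel evaluates `x` to a numeral before it unfolds `f`. -/
def force (x : ℕ) (f : ℕ → α) : α := Nat.rec (f 0) (fun n _ => f n.succ) x

/-- `f l`, written so that the kernel evaluates all entries of `l` before it unfolds `f`. -/
def forceList (l : List ℕ) : (List ℕ → α) → α :=
  l.rec (fun f => f []) fun x _ ih f => force x fun x => ih fun l => f (x :: l)

/- A bare recursor: `cond` and `ite` cost the kernel further unfolding steps at every use. -/
notation "kif" b "then" t "else" e => @Bool.rec (fun _ => _) e t b

theorem force_eq (x : ℕ) (f : ℕ → α) : force x f = f x := by cases x <;> rfl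

theorem forceList_eq (l : List ℕ) (f : List ℕ → α) : forceList l f = f l := by
  induction l generalizing f with
  | nil => rfl
  | cons x l ih => exact (force_eq x fun x => forceList l fun l => f (x :: l)).trans (ih _)

theorem kif_eq (b : Bool) (t e : α) : (kif b then t else e) = if b then t else e := by
  cases b <;> rfl

end Evaluation

section CircuitCodes

/-- The symmetric differences of the code `D` with the codes in `evens`, added to `evens`. -/
def addEvens (D : ℕ) (evens : List ℕ) : List ℕ := evens ++ evens.map (Nat.xor D)

/-- Whether the list `circuits` of codes contains a subset of `S`. -/
def hasSubset (S : ℕ) (circuits : List ℕ) : Bool :=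
  circuits.rec false fun C _ ih => kif Nat.beq (Nat.land C S) C then true else ih

/-- The symmetric differences of the code `D` with the codes in `evens` that contain no member of
`circuits`, added to `circuits`. -/
def addCircuits (D : ℕ) (evens circuits : List ℕ) : List ℕ :=
  evens.rec circuits fun S _ ih =>
    force (Nat.xor D S) fun S => kif hasSubset S circuits then ih else S :: ih

/-- The code of a closed walk through the extra edge number `t` with ends at the positions `c`. -/
def fundamentalCode (k t : ℕ) (c : ℕ × ℕ) : ℕ :=
  Nat.xor (Nat.xor (256 ^ c.1 - 1) (256 ^ c.2 - 1)) (255 * 256 ^ (k + 1 + t))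

/-- Extends the codes of the even sets and circuits of a trail with `t` extra edges by those that
contain some of the further extra edges `C`, and returns the circuits. -/
def extendCircuits (k : ℕ) : List (ℕ × ℕ) → ℕ → List ℕ → List ℕ → List ℕ
  | [], _, _, circuits => circuits
  | c :: C, t, evens, circuits =>
    force (fundamentalCode k t c) fun D =>
    forceList (addEvens D evens) fun evens' =>
    forceList (addCircuits D evens circuits) fun circuits' =>
    extendCircuits k C (t + 1) evens' circuits'

/-- The codes of the circuits of the trail around a `k`-cycle with extra edges `C`. -/
def circuitCodes (k : ℕ) (C : List (ℕ × ℕ)) : List ℕ :=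
  extendCircuits k C 0 [0, 256 ^ k - 1] [256 ^ k - 1]

/-- `l` lists the codes of the sets `S ⊆ range m` with `P (expand pos S)`, and `P` holds for no
further sets. -/
def Encodes (pos : ℕ → ℕ) (m : ℕ) (l : List ℕ) (P : Finset ℕ → Prop) : Prop :=
  ∃ L : List (Finset ℕ), l = L.map code ∧ (∀ S ∈ L, S ⊆ range m) ∧
    Enumerates (L.map (expand pos)) P

variable {pos : ℕ → ℕ}

theorem hasSubset_cons (S C : ℕ) (circuits : List ℕ) : hasSubset S (C :: circuits) =
    kif Nat.beq (Nat.land C S) C then true else hasSubset S circuits := rfl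

theorem addCircuits_cons (D S : ℕ) (evens circuits : List ℕ) :
    addCircuits D (S :: evens) circuits = force (D ^^^ S) fun S =>
      kif hasSubset S circuits then addCircuits D evens circuits
      else S :: addCircuits D evens circuits := rfl

theorem hasSubset_eq (S : Finset ℕ) (L : List (Finset ℕ)) :
    hasSubset (code S) (L.map code) = !decide (∀ C ∈ L, ¬ C ⊆ S) := by
  induction L with
  | nil => rfl
  | cons C L ih =>
    have hC : Nat.land (code C) (code S) = code C ↔ C ⊆ S := code_land_eq_left
    rw [List.map_cons, hasSubset_cons, kif_eq, ih]
    simp only [Nat.beq_eq, hC]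
    by_cases h : C ⊆ S <;> simp [h]

theorem addCircuits_eq (D : Finset ℕ) (evens circuits : List (Finset ℕ)) :
    addCircuits (code D) (evens.map code) (circuits.map code) =
      ((evens.map (D ∆ ·)).filter (fun S => ∀ C ∈ circuits, ¬ C ⊆ S) ++ circuits).map code := by
  induction evens with
  | nil => rfl
  | cons S evens ih =>
    rw [List.map_cons, addCircuits_cons, force_eq, kif_eq, ← code_symmDiff, hasSubset_eq, ih]
    simp only [List.map_cons, List.filter_cons, Bool.not_eq_true', decide_eq_false_iff_not,
      decide_eq_true_eq]
    split_ifs <;> simp_all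

theorem addEvens_eq (D : Finset ℕ) (evens : List (Finset ℕ)) :
    addEvens (code D) (evens.map code) = (evens ++ evens.map (D ∆ ·)).map code := by
  simp only [addEvens, List.map_append, List.map_map, Function.comp_def, code_symmDiff]
  rfl

theorem fundamentalCode_eq (k t : ℕ) (c : ℕ × ℕ) :
    fundamentalCode k t c = code (range c.1 ∆ range c.2 ∆ {k + 1 + t}) := by
  simp only [code_symmDiff, code_range, code_singleton]
  rfl

variable {V : Type*} [DecidableEq V] {e : ℕ → Sym2 V} {T D : Finset ℕ} {i m : ℕ}
  {evens circuits : List ℕ}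

theorem map_symmDiff_map_expand (hpos : StrictMono pos) (L : List (Finset ℕ)) :
    (L.map (D ∆ ·)).map (expand pos) = (L.map (expand pos)).map (expand pos D ∆ ·) := by
  simp [Function.comp_def, expand_symmDiff hpos]

theorem symmDiff_subset_range_succ {S : Finset ℕ} (hD : D ⊆ range (m + 1)) (hS : S ⊆ range m) :
    D ∆ S ⊆ range (m + 1) :=
  symmDiff_le_sup.trans (sup_le hD (hS.trans (range_subset_range.mpr m.le_succ)))

theorem Encodes.evens_insert (hpos : StrictMono pos) (h : Encodes pos m evens (IsEvenIn e T))
    (hDm : D ⊆ range (m + 1)) (hi : i ∉ T) (hiD : i ∈ expand pos D)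
    (hD : IsEvenIn e (insert i T) (expand pos D)) :
    Encodes pos (m + 1) (addEvens (code D) evens) (IsEvenIn e (insert i T)) := by
  obtain ⟨L, rfl, hLm, hL⟩ := h
  refine ⟨L ++ L.map (D ∆ ·), addEvens_eq D L, ?_, ?_⟩
  · simp only [List.mem_append, List.mem_map]
    rintro _ (hS | ⟨S, hS, rfl⟩)
    · exact (hLm _ hS).trans (range_subset_range.mpr m.le_succ)
    · exact symmDiff_subset_range_succ hDm (hLm S hS)
  · rw [List.map_append, map_symmDiff_map_expand hpos]
    exact hL.evens_insert hi hiD hD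

theorem Encodes.circuits_insert (hpos : StrictMono pos) (hE : Encodes pos m evens (IsEvenIn e T))
    (hC : Encodes pos m circuits (IsCircuitIn e T)) (hDm : D ⊆ range (m + 1)) (hi : i ∉ T)
    (hiD : i ∈ expand pos D) (hD : IsEvenIn e (insert i T) (expand pos D)) :
    Encodes pos (m + 1) (addCircuits (code D) evens circuits) (IsCircuitIn e (insert i T)) := by
  obtain ⟨L, rfl, hLm, hL⟩ := hE
  obtain ⟨K, rfl, hKm, hK⟩ := hC
  refine ⟨_, addCircuits_eq D L K, ?_, ?_⟩
  · simp only [List.mem_append, List.mem_filter, List.mem_map]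
    rintro _ (⟨⟨S, hS, rfl⟩, -⟩ | hS)
    · exact symmDiff_subset_range_succ hDm (hLm S hS)
    · exact (hKm _ hS).trans (range_subset_range.mpr m.le_succ)
  · have hfilter : ((L.map (D ∆ ·)).filter fun S => ∀ C ∈ K, ¬ C ⊆ S).map (expand pos) =
        ((L.map (expand pos)).map (expand pos D ∆ ·)).filter
          fun S => ∀ C ∈ K.map (expand pos), ¬ C ⊆ S := by
      rw [← map_symmDiff_map_expand hpos, List.filter_map (f := expand pos)]
      simp [Function.comp_def, expand_subset_iff hpos]
    rw [List.map_append, hfilter]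
    exact hL.circuits_insert hK hi hiD hD

variable {k t : ℕ} {c : ℕ × ℕ} {C : List (ℕ × ℕ)}

theorem expand_fundamental (hpos : StrictMono pos) (h0 : pos 0 = 0)
    (hk : ∀ t, pos (k + t) = pos k + t) : expand pos (range c.1 ∆ range c.2 ∆ {k + 1 + t}) =
      range (pos c.1) ∆ range (pos c.2) ∆ {pos k + 1 + t} := by
  have hadd (t : ℕ) : pos (k + 1 + t) = pos k + 1 + t := by rw [add_assoc, hk, add_assoc]
  have hsingleton : expand pos {k + 1 + t} = {pos k + 1 + t} := by
    rw [expand_singleton (by rw [add_assoc _ t, hadd, hadd, add_assoc _ t]), hadd]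
  simp only [expand_symmDiff hpos, expand_range hpos h0, hsingleton]

theorem mem_expand_fundamental (hpos : StrictMono pos) (h0 : pos 0 = 0)
    (hk : ∀ t, pos (k + t) = pos k + t) (hc : c.1 ≤ k + 1 ∧ c.2 ≤ k + 1) :
    pos k + 1 + t ∈ expand pos (range c.1 ∆ range c.2 ∆ {k + 1 + t}) := by
  have h₁ : pos c.1 ≤ pos k + 1 := hk 1 ▸ hpos.monotone hc.1
  have h₂ : pos c.2 ≤ pos k + 1 := hk 1 ▸ hpos.monotone hc.2
  simp [expand_fundamental hpos h0 hk, mem_symmDiff, show pos c.1 ≤ pos k + 1 + t by omega,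
    show pos c.2 ≤ pos k + 1 + t by omega]

theorem isEvenIn_expand_fundamental (hpos : StrictMono pos) (h0 : pos 0 = 0)
    (hk : ∀ t, pos (k + t) = pos k + t) (hc : c.1 ≤ k + 1 ∧ c.2 ≤ k + 1)
    (hct : C[t]? = some c) : IsEvenIn (edge (pos k) (C.map (Prod.map pos pos)))
      (insert (pos k + 1 + t) (range (pos k + 1 + t)))
      (expand pos (range c.1 ∆ range c.2 ∆ {k + 1 + t})) := by
  rw [expand_fundamental hpos h0 hk]
  exact isEvenIn_fundamental (c := Prod.map pos pos c) (by simp [hct])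
    (hk 1 ▸ hpos.monotone hc.1) (hk 1 ▸ hpos.monotone hc.2)

/-- The trail around a cycle of length `pos k` with extra edges between the positions `pos i` is a
subdivision of the trail around a `k`-cycle. Its circuits are the subdivided circuits of the latter,
so their codes do not depend on `pos`. -/
theorem encodes_extendCircuits (hpos : StrictMono pos) (h0 : pos 0 = 0)
    (hk : ∀ t, pos (k + t) = pos k + t) (hC : ∀ c ∈ C, c.1 ≤ k + 1 ∧ c.2 ≤ k + 1)
    {C₁ C₂ : List (ℕ × ℕ)} (hC₁₂ : C₁ ++ C₂ = C)
    (hE : Encodes pos (k + 1 + C₁.length) evens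
      (IsEvenIn (edge (pos k) (C.map (Prod.map pos pos))) (range (pos k + 1 + C₁.length))))
    (hcirc : Encodes pos (k + 1 + C₁.length) circuits
      (IsCircuitIn (edge (pos k) (C.map (Prod.map pos pos))) (range (pos k + 1 + C₁.length)))) :
    Encodes pos (k + 1 + C.length) (extendCircuits k C₂ C₁.length evens circuits)
      (IsCircuitIn (edge (pos k) (C.map (Prod.map pos pos))) (range (pos k + 1 + C.length))) := by
  induction C₂ generalizing C₁ evens circuits with
  | nil => simpa [extendCircuits, ← hC₁₂] using hcirc
  | cons c C₂ ih =>
    have hct : C[C₁.length]? = some c := by simp [← hC₁₂]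
    have hc := hC c (List.mem_of_getElem? hct)
    set t := C₁.length
    have hmem := mem_expand_fundamental (t := t) hpos h0 hk hc
    have hD := isEvenIn_expand_fundamental hpos h0 hk hc hct
    have hDm : range c.1 ∆ range c.2 ∆ {k + 1 + t} ⊆ range (k + 1 + t + 1) := by
      have hadd : pos (k + 1 + t + 1) = pos k + 1 + t + 1 := by
        rw [add_assoc, add_assoc, hk, ← add_assoc, ← add_assoc]
      rw [← expand_subset_iff hpos, expand_range hpos h0, hadd]
      exact hD.1.trans range_add_one.ge
    have hE' := hE.evens_insert hpos hDm notMem_range_self hmem hD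
    have hcirc' := hE.circuits_insert hpos hcirc hDm notMem_range_self hmem hD
    rw [← range_add_one] at hE' hcirc'
    have hlength : (C₁ ++ [c]).length = t + 1 := List.length_append
    simp only [extendCircuits, force_eq, forceList_eq, fundamentalCode_eq]
    rw [← hlength]
    apply ih
    · rw [List.append_assoc, ← hC₁₂, List.singleton_append]
    · rwa [hlength]
    · rwa [hlength]

theorem encodes_circuitCodes (hpos : StrictMono pos) (h0 : pos 0 = 0)
    (hk : ∀ t, pos (k + t) = pos k + t) (hk0 : 0 < k) (hC : ∀ c ∈ C, c.1 ≤ k + 1 ∧ c.2 ≤ k + 1) :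
    Encodes pos (k + 1 + C.length) (circuitCodes k C)
      (IsCircuitIn (edge (pos k) (C.map (Prod.map pos pos))) (range (pos k + 1 + C.length))) := by
  obtain ⟨hevens, hcircuits⟩ :=
    enumerates_trail (E := C.map (Prod.map pos pos)) (h0 ▸ hpos hk0 : 0 < pos k)
  have hempty : expand pos ∅ = ∅ := biUnion_empty
  refine encodes_extendCircuits hpos h0 hk hC (List.nil_append C) ⟨[∅, range k], ?_, ?_, ?_⟩
    ⟨[range k], ?_, ?_, ?_⟩
  · simp [code_range, code_eq_zero.mpr]
  · simp
  · simpa [hempty, expand_range hpos h0] using hevens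
  · simp [code_range]
  · simp
  · simpa [expand_range hpos h0] using hcircuits

end CircuitCodes

section SearchAlgorithm

/-- The total of those base-256 digits of `W` that are kept by the mask `S`. It is read off modulo
`255`, hence correct for totals less than `255` only. -/
def weight (W S : ℕ) : ℕ := Nat.mod (Nat.land W S) 255

/-- Passes to `next` the list `l` with the first entry `x` removed; succeeds if there is none. -/
def strike (x : ℕ) (next : List ℕ → Bool) (l : List ℕ) : Bool :=
  l.rec (fun _ => true)
    (fun y l ih next => kif Nat.beq y x then next l else ih fun l => next (y :: l)) next

/-- `f 1`, …, `f n` are all true. -/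
def allPos (f : ℕ → Bool) (n : ℕ) : Bool :=
  n.rec true fun i ih => kif force i.succ f then ih else false

/-- Tests `next` on all numbers obtained from `W` by filling the base-256 digits in `A` with
positive numbers of sum `r`. The code `A` uses the `k` digits from the digit `p` on only. -/
def assign (next : ℕ → Bool) (k : ℕ) : ℕ → ℕ → ℕ → ℕ → Bool :=
  k.rec (fun _ _ W _ => next W) fun _ ih A r W p =>
    kif Nat.beq (Nat.land p A) 0 then force (256 * p) (ih A r W)
    else kif Nat.beq A (255 * p) then kif Nat.beq r 0 then true else force (W + r * p) next
    else force (A - 255 * p) fun A => force (256 * p) fun p' =>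
      allPos (fun x => force (W + x * p) fun W => force (r - x) fun r => ih A r W p') (r - 1)

/-- Strikes from the list `pending` the lengths of those of the given circuits that contain all or
none of the digits in `U`, and collects the other circuits in `unsettled`. Here `W` holds the digits
outside `U`, and `rem` is the sum of those in `U`. -/
def settle (rem W U : ℕ) (next : List ℕ → List ℕ → Bool) (circuits : List ℕ) :
    List ℕ → List ℕ → Bool :=
  circuits.rec next fun S _ ih pending unsettled =>
    force (Nat.land U S) fun A =>
      kif Nat.beq A 0 then
        force (weight W S) fun l => strike l (fun pending => ih pending unsettled) pending
      else kif Nat.beq A U then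
        force (weight W S + rem) fun l => strike l (fun pending => ih pending unsettled) pending
      else ih pending (S :: unsettled)

/-- Tests `leaf` on all numbers obtained from `W` by filling the digits in `U` with positive numbers
of sum `rem` such that `pending` lists the weights of `circuits`. If the first pending length
belongs to the circuit `S`, the sums of the digits in `U ∩ S` and in `U \ S` are known; those with
the smaller sum are filled first. The depth of the recursion is bounded by `fuel`. -/
def search (leaf : ℕ → Bool) (k : ℕ) : ℕ → ℕ → ℕ → ℕ → List ℕ → List ℕ → Bool
  | 0, _, _, _, _, _ => false
  | fuel + 1, rem, W, U, pending, circuits =>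
    settle rem W U
      (fun pending unsettled =>
        pending.rec (assign leaf k U rem W 1) fun l _ _ => unsettled.all fun S =>
          force (Nat.land U S) fun A => force (l - weight W S) fun r =>
          force (U - A) fun B => force (rem - r) fun q =>
            kif Nat.ble r q then
              assign (fun W => search leaf k fuel q W B pending unsettled) k A r W 1
            else assign (fun W => search leaf k fuel r W A pending unsettled) k B q W 1)
      circuits pending []

/-- The even numbers `lo, lo + 2, …, lo + 2 (m - 1)`, each listed twice. The alternation between
the smallest and the largest number makes the search faster. -/
def evenLengths : ℕ → ℕ → List ℕ
  | _, 0 => []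
  | lo, 1 => [lo, lo]
  | lo, m + 2 => lo :: lo :: (lo + 2 * (m + 1)) :: (lo + 2 * (m + 1)) :: evenLengths (lo + 2) m

end SearchAlgorithm

section SearchSoundness

variable {w : ℕ → ℕ} {A B U : Finset ℕ} {k m : ℕ}

theorem weight_pack (hw : ∀ i, w i < 256) (hA : ∑ i ∈ A, w i < 255) :
    weight (pack w A) (code B) = ∑ i ∈ A ∩ B, w i := by
  have hle : ∑ i ∈ A ∩ B, w i ≤ ∑ i ∈ A, w i := sum_le_sum_of_subset inter_subset_left
  calc weight (pack w A) (code B) = pack w (A ∩ B) % 255 := congrArg (· % 255) (pack_land_code hw)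
    _ = ∑ i ∈ A ∩ B, w i := by rw [pack_mod, Nat.mod_eq_of_lt (hle.trans_lt hA)]

theorem strike_eq {x : ℕ} {next : List ℕ → Bool} {l : List ℕ} (h : x ∈ l) :
    strike x next l = next (l.erase x) := by
  induction l generalizing next with
  | nil => simp at h
  | cons y l ih =>
    have hstep : strike x next (y :: l) =
      kif Nat.beq y x then next l else strike x (fun l => next (y :: l)) l := rfl
    rw [hstep, kif_eq]
    by_cases hyx : y = x
    · simp [hyx]
    · simp [hyx, ih (List.mem_of_ne_of_mem (Ne.symm hyx) h)]

theorem allPos_eq_true {f : ℕ → Bool} {n : ℕ} :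
    allPos f n = true ↔ ∀ i, 1 ≤ i → i ≤ n → f i = true := by
  induction n with
  | zero => simp [allPos]; omega
  | succ n ih =>
    have hstep : allPos f (n + 1) = kif force n.succ f then allPos f n else false := rfl
    rw [hstep, kif_eq, force_eq]
    refine ⟨fun h i hi hin => ?_, fun h => ?_⟩
    · rcases hin.lt_or_eq with hin | rfl
      · exact ih.mp (by simp_all) i hi (Nat.lt_succ_iff.mp hin)
      · simp_all
    · rw [if_pos (h _ n.succ_pos le_rfl)]
      exact ih.mpr fun i hi hin => h i hi (hin.trans n.le_succ)

theorem count_evenLengths {lo ℓ : ℕ} :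
    (evenLengths lo m).count ℓ =
      if lo ≤ ℓ ∧ ℓ < lo + 2 * m ∧ (ℓ - lo) % 2 = 0 then 2 else 0 := by
  induction lo, m using evenLengths.induct with
  | case1 => simp [evenLengths]; omega
  | case2 lo =>
    simp only [evenLengths, List.count_cons, List.count_nil, beq_iff_eq]
    split_ifs <;> omega
  | case3 lo m ih =>
    simp only [evenLengths, List.count_cons, ih, beq_iff_eq]
    split_ifs <;> omega

theorem assign_succ (next : ℕ → Bool) (k A r W p : ℕ) : assign next (k + 1) A r W p =
    kif Nat.beq (Nat.land p A) 0 then force (256 * p) (assign next k A r W)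
    else kif Nat.beq A (255 * p) then kif Nat.beq r 0 then true else force (W + r * p) next
    else force (A - 255 * p) fun A => force (256 * p) fun p' =>
      allPos (fun x => force (W + x * p) fun W => force (r - x) fun r =>
        assign next k A r W p') (r - 1) := rfl

theorem land_code_eq_zero {j : ℕ} : Nat.land (256 ^ j) (code A) = 0 ↔ j ∉ A := by
  have hj : Nat.land (256 ^ j) (code A) = pack (fun _ => 1) ({j} ∩ A) := by
    rw [← pack_land_code fun _ => by norm_num]
    simp [pack]
  rw [hj]
  by_cases h : j ∈ A <;> simp [pack, h]

theorem subset_Ico_succ {j : ℕ} (hA : A ⊆ Ico j (j + (k + 1))) (hj : j ∉ A) :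
    A ⊆ Ico (j + 1) (j + 1 + k) := fun i hi => by
  have := mem_Ico.mp (hA hi)
  have : i ≠ j := fun hij => hj (hij ▸ hi)
  exact mem_Ico.mpr (by omega)

theorem assign_sound (hw : ∀ i, 0 < w i) {next : ℕ → Bool} {j W : ℕ} (hA : A ⊆ Ico j (j + k))
    (h : assign next k (code A) (∑ i ∈ A, w i) W (256 ^ j) = true) :
    next (W + pack w A) = true := by
  induction k generalizing A j W with
  | zero =>
    obtain rfl : A = ∅ := by simpa using hA
    exact h
  | succ k ih =>
    rw [assign_succ] at h
    simp only [force_eq, kif_eq, Nat.beq_eq, land_code_eq_zero, ← pow_succ', ← code_singleton,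
      code_injective.eq_iff, ite_not] at h
    split_ifs at h with hjA hAj hr
    · subst hAj
      exact absurd hr (by simpa using (hw j).ne')
    · subst hAj
      simpa [pack] using h
    · have hjA' : {j} ⊆ A := singleton_subset_iff.mpr hjA
      have hrest : (A \ {j}).Nonempty := sdiff_nonempty.mpr fun h => hAj (h.antisymm hjA')
      have hsum : ∑ i ∈ A \ {j}, w i + w j = ∑ i ∈ A, w i := by simpa using sum_sdiff (f := w) hjA'
      have hpack : pack w (A \ {j}) + w j * 256 ^ j = pack w A := by
        simpa [pack] using sum_sdiff (f := fun i => w i * 256 ^ i) hjA'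
      have hpos : 0 < ∑ i ∈ A \ {j}, w i := sum_pos (fun i _ => hw i) hrest
      have hdigit := allPos_eq_true.mp h (w j) (hw j) (by omega)
      rw [← code_sdiff hjA', ← hsum, Nat.add_sub_cancel] at hdigit
      have := ih (subset_Ico_succ (sdiff_subset.trans hA) (by simp)) hdigit
      rwa [add_assoc, add_comm (w j * _), hpack] at this
    · exact ih (subset_Ico_succ hA hjA) h

theorem settle_cons (rem W U : ℕ) (next : List ℕ → List ℕ → Bool) (S : ℕ)
    (circuits pending unsettled : List ℕ) :
    settle rem W U next (S :: circuits) pending unsettled = force (Nat.land U S) fun A =>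
      kif Nat.beq A 0 then force (weight W S) fun l => strike l
        (fun pending => settle rem W U next circuits pending unsettled) pending
      else kif Nat.beq A U then force (weight W S + rem) fun l => strike l
        (fun pending => settle rem W U next circuits pending unsettled) pending
      else settle rem W U next circuits pending (S :: unsettled) := rfl

theorem weight_pack_sdiff {S : Finset ℕ} (hw : ∀ i, w i < 256) (hm : ∑ i ∈ range m, w i < 255)
    (hS : S ⊆ range m) :
    weight (pack w (range m \ U)) (code S) = ∑ i ∈ S \ U, w i := by
  rw [weight_pack hw ((sum_le_sum_of_subset sdiff_subset).trans_lt hm)]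
  congr 1
  grind

theorem settle_sound (hw : ∀ i, w i < 256) (hm : ∑ i ∈ range m, w i < 255)
    {next : List ℕ → List ℕ → Bool} {pending : List ℕ} {L K : List (Finset ℕ)}
    (hL : ∀ S ∈ L, S ⊆ range m) (hK : ∀ S ∈ K, S ⊆ range m)
    (hpending : pending.Perm ((L ++ K).map fun S => ∑ i ∈ S, w i))
    (h : settle (∑ i ∈ U, w i) (pack w (range m \ U)) (code U) next (L.map code) pending
      (K.map code) = true) :
    ∃ (pending' : List ℕ) (K' : List (Finset ℕ)), (∀ S ∈ K', S ⊆ range m) ∧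
      pending'.Perm (K'.map fun S => ∑ i ∈ S, w i) ∧ next pending' (K'.map code) = true := by
  induction L generalizing pending K with
  | nil => exact ⟨pending, K, hK, hpending, h⟩
  | cons S L ih =>
    rw [List.forall_mem_cons] at hL
    have hland : Nat.land (code U) (code S) = code (U ∩ S) := code_land
    have hmem : ∑ i ∈ S, w i ∈ pending := hpending.symm.subset List.mem_cons_self
    have herase := (List.perm_cons_erase hmem).symm.trans hpending |>.cons_inv
    rw [List.map_cons, settle_cons] at h
    simp only [force_eq, kif_eq, Nat.beq_eq, hland, code_eq_zero, code_injective.eq_iff,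
      weight_pack_sdiff hw hm hL.1] at h
    split_ifs at h with hdisj hsub
    · rw [sdiff_eq_self_of_disjoint (disjoint_iff_inter_eq_empty.mpr hdisj).symm,
        strike_eq hmem] at h
      exact ih hL.2 hK herase h
    · rw [sum_sdiff (inter_eq_left.mp hsub), strike_eq hmem] at h
      exact ih hL.2 hK herase h
    · exact ih hL.2 (List.forall_mem_cons.mpr ⟨hL.1, hK⟩)
        (hpending.trans (List.perm_middle.symm.map _)) h

theorem pack_sdiff_add (hAU : A ⊆ U) (hU : U ⊆ range m) :
    pack w (range m \ U) + pack w A = pack w (range m \ (U \ A)) := by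
  rw [pack, pack, ← sum_union (disjoint_sdiff_self_left.mono_right hAU), ← pack]
  congr 1
  grind

theorem search_sound (hw0 : ∀ i, 0 < w i) (hw : ∀ i, w i < 256) (hm : ∑ i ∈ range m, w i < 255)
    (hkm : k ≤ m) (hU : U ⊆ range k) {leaf : ℕ → Bool} {fuel : ℕ} {pending : List ℕ}
    {L : List (Finset ℕ)} (hL : ∀ S ∈ L, S ⊆ range m)
    (hpending : pending.Perm (L.map fun S => ∑ i ∈ S, w i))
    (h : search leaf k fuel (∑ i ∈ U, w i) (pack w (range m \ U)) (code U) pending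
      (L.map code) = true) :
    leaf (pack w (range m)) = true := by
  induction fuel generalizing U pending L with
  | zero => simp [search] at h
  | succ fuel ih =>
    have hUm : U ⊆ range m := hU.trans (range_subset_range.mpr hkm)
    have hassign {A : Finset ℕ} (hA : A ⊆ U) {next : ℕ → Bool}
        (h : assign next k (code A) (∑ i ∈ A, w i) (pack w (range m \ U)) 1 = true) :
        next (pack w (range m \ (U \ A))) = true := by
      rw [← pack_sdiff_add hA hUm]
      exact assign_sound (j := 0) hw0 (by simpa using (hA.trans hU : A ⊆ range k)) h
    obtain ⟨pending', K, hK, hpending', h⟩ := settle_sound (K := []) hw hm hL (by simp)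
      (by simpa using hpending) h
    rcases pending' with _ | ⟨l, rest⟩
    · simpa using hassign (A := U) Subset.rfl h
    obtain ⟨S, hS, rfl⟩ := List.mem_map.mp (hpending'.subset List.mem_cons_self)
    replace h := List.all_eq_true.mp h (code S) (List.mem_map_of_mem hS)
    have hland : Nat.land (code U) (code S) = code (U ∩ S) := code_land
    have hinter : U ∩ S ⊆ U := inter_subset_left
    have hS_sum : ∑ i ∈ S, w i - ∑ i ∈ S \ U, w i = ∑ i ∈ U ∩ S, w i := by
      rw [← sum_inter_add_sum_sdiff S U, Nat.add_sub_cancel, inter_comm]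
    have hU_sum : ∑ i ∈ U, w i - ∑ i ∈ U ∩ S, w i = ∑ i ∈ U \ (U ∩ S), w i :=
      Nat.sub_eq_of_eq_add (sum_sdiff hinter).symm
    simp only [force_eq, kif_eq, hland, weight_pack_sdiff hw hm (hK S hS), hS_sum, hU_sum,
      ← code_sdiff hinter] at h
    split_ifs at h
    · exact ih (sdiff_subset.trans hU) hK hpending' (hassign (A := U ∩ S) hinter h)
    · have := hassign (A := U \ (U ∩ S)) sdiff_subset h
      rw [Finset.sdiff_sdiff_eq_self hinter] at this
      exact ih (hinter.trans hU) hK hpending' this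

end SearchSoundness

section TrailGraph

variable {n : ℕ} {E : List (ℕ × ℕ)}

/-- The extra edges `E` are distinct, and neither loops nor edges of the trail. -/
def IsSimple (n : ℕ) (E : List (ℕ × ℕ)) : Prop :=
  (edges n E).Nodup ∧ ∀ e ∈ edges n E, ¬ e.IsDiag

/-- The graph formed by a trail around a cycle of length `n` and the extra edges `E`. -/
def trailGraph (n : ℕ) (E : List (ℕ × ℕ)) : SimpleGraph (Fin (n + 1)) :=
  fromEdgeSet {e | e ∈ edges n E}

theorem edgeSet_trailGraph (hE : IsSimple n E) :
    (trailGraph n E).edgeSet = edge n E '' range (n + 1 + E.length) := by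
  rw [image_edge, trailGraph, edgeSet_fromEdgeSet, sdiff_eq_left, Set.disjoint_left]
  exact hE.2

theorem ncard_edgeSet_trailGraph (hE : IsSimple n E) :
    (trailGraph n E).edgeSet.ncard = n + 1 + E.length := by
  rw [edgeSet_trailGraph hE, (edge_injOn hE.1).ncard_image, Set.ncard_coe_finset,
    card_range]

theorem count_card_eq_cycleCount (hE : IsSimple n E) {L : List (Finset ℕ)}
    (hL : Enumerates L (IsCircuitIn (edge n E) (range (n + 1 + E.length)))) (ℓ : ℕ) :
    (L.map Finset.card).count ℓ = if 3 ≤ ℓ then cycleCount (trailGraph n E) ℓ else 0 := by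
  have hinj := edge_injOn hE.1
  split_ifs with hℓ
  · rw [cycleCount_eq_ncard_isCircuit hinj (edgeSet_trailGraph hE) hℓ, List.count_eq_countP,
      List.countP_map, List.countP_eq_length_filter, ← List.toFinset_card_of_nodup (hL.1.filter _),
      ← Set.ncard_coe_finset]
    congr 1
    ext S
    simp [hL.2, IsCircuitIn, and_assoc]
  · refine List.count_eq_zero.mpr fun hmem => hℓ ?_
    obtain ⟨S, hS, rfl⟩ := List.mem_map.mp hmem
    have hcirc := (hL.2 S).mp hS
    refine hcirc.2.three_le_card (hinj.mono hcirc.1) fun i hi => hE.2 _ ?_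
    exact image_edge.le ⟨i, hcirc.1 hi, rfl⟩

end TrailGraph

section Targets

/-- The extra edges of the oddly (2)-bipancyclic graphs with `n + 1` vertices and at most `n + 5`
edges. -/
def targets : ℕ → List (List (ℕ × ℕ))
  | 8 => [[(2, 9), (0, 5)], [(2, 9), (3, 6)]]
  | 14 => [[(2, 15), (0, 11), (4, 13)], [(2, 15), (0, 5), (4, 7)], [(2, 15), (3, 6), (4, 13)]]
  | 20 => [[(4, 21), (0, 5), (0, 13), (12, 19)], [(4, 21), (0, 5), (5, 12), (6, 13)],
      [(4, 21), (0, 5), (6, 13), (7, 14)], [(4, 21), (0, 5), (7, 14), (8, 15)],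
      [(4, 21), (0, 5), (8, 15), (9, 16)], [(4, 21), (0, 5), (9, 16), (10, 17)],
      [(4, 21), (0, 5), (10, 17), (11, 18)], [(4, 21), (0, 5), (11, 18), (12, 19)]]
  | 24 => [[(14, 25), (12, 15), (15, 20), (16, 21)], [(14, 25), (0, 19), (12, 15), (18, 23)],
      [(14, 25), (12, 15), (17, 22), (18, 23)], [(14, 25), (12, 15), (16, 21), (17, 22)]]
  | _ => []

/-- The map `v ↦ a + b v` modulo `n` on the numbers below `n`, which fixes all others. -/
def affine (n a b v : ℕ) : ℕ := if v < n then (a + b * v) % n else v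

/-- Whether `f` maps all edges between the positions `E` to edges between the positions `F`. -/
def mapsEdges (n : ℕ) (f : ℕ → ℕ) (E F : List (ℕ × ℕ)) : Bool :=
  E.all fun c => force (f (vertex n c.1)) fun x => force (f (vertex n c.2)) fun y => F.any fun d =>
    Nat.beq x (vertex n d.1) && Nat.beq y (vertex n d.2) ||
      Nat.beq x (vertex n d.2) && Nat.beq y (vertex n d.1)

/-- Whether a rotation or reflection of the cycle maps the trail with extra edges `E` to the trail
with extra edges `F`. The few edges outside the cycle are tested first. -/
def isTarget (n : ℕ) (E F : List (ℕ × ℕ)) : Bool :=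
  Nat.beq E.length F.length && (List.range n).any fun a => [1, n - 1].any fun b =>
    Nat.beq (Nat.gcd n b) 1 && mapsEdges n (affine n a b) ((n, n + 1) :: E) ((n, n + 1) :: F) &&
      mapsEdges n (affine n a b) ((List.range n).map fun i => (i, i + 1))
        ((List.range n).map fun i => (i, i + 1))

theorem nonempty_iso_of_bijective {V W : Type*} [Finite W] {G : SimpleGraph V} {H : SimpleGraph W}
    (f : G →g H) (hf : Function.Bijective f) (hcard : H.edgeSet.ncard ≤ G.edgeSet.ncard) :
    Nonempty (G ≃g H) := by
  have hinj := Sym2.map.injective hf.1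
  have himage : Sym2.map f '' G.edgeSet = H.edgeSet := by
    refine Set.eq_of_subset_of_ncard_le ?_ (by rwa [Set.ncard_image_of_injective _ hinj])
    rintro _ ⟨e, he, rfl⟩
    exact f.map_mem_edgeSet he
  refine ⟨⟨Equiv.ofBijective f hf, fun {x y} => ⟨fun hxy => ?_, f.map_adj⟩⟩⟩
  rw [Equiv.ofBijective_apply, Equiv.ofBijective_apply, ← mem_edgeSet, ← himage, ← Sym2.map_mk,
    hinj.mem_set_image] at hxy
  exact hxy

variable {n a b v : ℕ} {E F : List (ℕ × ℕ)}

theorem affine_lt (hv : v < n + 1) : affine n a b v < n + 1 := by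
  unfold affine
  split_ifs with h
  · exact (Nat.mod_lt _ (by omega)).trans n.lt_succ_self
  · exact hv

theorem affine_injective (hb : Nat.Coprime n b) : (affine n a b).Injective := by
  intro v w h
  have hlt (x : ℕ) (hx : x < n) : (a + b * x) % n < n := Nat.mod_lt _ (by omega)
  unfold affine at h
  split_ifs at h with hv hw hw
  · exact (Nat.ModEq.cancel_left_of_coprime hb (Nat.ModEq.add_left_cancel' a h)).eq_of_lt_of_lt
      hv hw
  · exact absurd (h ▸ hlt v hv) hw
  · exact absurd (h ▸ hlt w hw) hv
  · exact h

theorem map_mem_of_mapsEdges {f : Fin (n + 1) → Fin (n + 1)} {g : ℕ → ℕ}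
    (hfg : ∀ v, (f v : ℕ) = g v) (h : mapsEdges n g E F = true) :
    ∀ c ∈ E, ∃ d ∈ F, s(f (vertex n c.1), f (vertex n c.2)) = s(vertex n d.1, vertex n d.2) := by
  simpa [mapsEdges, force_eq, ← hfg, Fin.val_inj] using h

theorem mem_edges_iff {e : Sym2 (Fin (n + 1))} : e ∈ edges n E ↔
    (∃ c ∈ (List.range n).map fun i => (i, i + 1), s(vertex n c.1, vertex n c.2) = e) ∨
      ∃ c ∈ (n, n + 1) :: E, s(vertex n c.1, vertex n c.2) = e := by
  simp [edges, List.range_succ, or_and_right, exists_or, eq_comm (a := e)]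

theorem nonempty_iso_of_isTarget (hE : IsSimple n E) (hF : IsSimple n F)
    (h : isTarget n E F = true) : Nonempty (trailGraph n E ≃g trailGraph n F) := by
  simp only [isTarget, Bool.and_eq_true, List.any_eq_true, Nat.beq_eq] at h
  obtain ⟨hlength, a, -, b, -, ⟨hb, hextra⟩, hcycle⟩ := h
  let f (v : Fin (n + 1)) : Fin (n + 1) := ⟨affine n a b v, affine_lt v.isLt⟩
  have hf : f.Injective := fun v w hvw => Fin.ext (affine_injective hb (Fin.ext_iff.mp hvw))
  have hedge {e : Sym2 (Fin (n + 1))} (he : e ∈ edges n E) : e.map f ∈ edges n F := by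
    rw [mem_edges_iff] at he ⊢
    rcases he with ⟨c, hc, rfl⟩ | ⟨c, hc, rfl⟩
    · obtain ⟨d, hd, hcd⟩ := map_mem_of_mapsEdges (f := f) (fun _ => rfl) hcycle c hc
      exact .inl ⟨d, hd, hcd.symm⟩
    · obtain ⟨d, hd, hcd⟩ := map_mem_of_mapsEdges (f := f) (fun _ => rfl) hextra c hc
      exact .inr ⟨d, hd, hcd.symm⟩
  have hhom {x y : Fin (n + 1)} (hxy : (trailGraph n E).Adj x y) :
      (trailGraph n F).Adj (f x) (f y) := by
    rw [trailGraph, fromEdgeSet_adj] at hxy ⊢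
    exact ⟨hedge hxy.1, hf.ne hxy.2⟩
  refine nonempty_iso_of_bijective ⟨f, hhom⟩ (Finite.injective_iff_bijective.mp hf) ?_
  rw [ncard_edgeSet_trailGraph hE, ncard_edgeSet_trailGraph hF, hlength]

end Targets

section Types

/-- The pairs of positions of the trail around a `k`-cycle that an extra edge may join. Position `k`
is left out as it is the same vertex as position `0`. -/
def pairs (k : ℕ) : List (ℕ × ℕ) :=
  (List.range k ×ˢ List.range (k + 2)).filter fun c => c.1 < c.2 && c.2 != k && c != (0, k + 1)

/-- Whether all positions other than `0` and `k` are ends of some pair in `C`. -/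
def covers (k : ℕ) (C : List (ℕ × ℕ)) : Bool :=
  ((k + 1) :: List.range' 1 (k - 1)).all fun i => C.any fun c => Nat.beq i c.1 || Nat.beq i c.2

/-- The choices of at most four extra edges of the trail around a `k`-cycle that cannot be obtained
from those of a shorter cycle by subdividing its edges. -/
def types (k : ℕ) : List (List (ℕ × ℕ)) :=
  ((List.range 5).flatMap fun r => (pairs k).sublistsLen r).filter (covers k)

/-- Tests whether all oddly (2)-bipancyclic graphs among the subdivisions of the trail around a
`k`-cycle with extra edges `C` are listed in `targets`. A graph with `n + 1` vertices must have
`n - 2` cycles, hence `n` can be read off from the number of circuits. -/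
def checkType (k : ℕ) (C : List (ℕ × ℕ)) : Bool :=
  forceList (circuitCodes k C) fun circuits => force circuits.length fun T =>
    kif Nat.beq (T % 2) 1 then true
    else Nat.ble (T + C.length) 250 && forceList (evenLengths 4 (T / 2)) fun pending =>
      force ((256 ^ (k + 1 + C.length) - 256 ^ k) / 255) fun W =>
      search (fun W => (targets (T + 2)).any (isTarget (T + 2)
        (C.map (Prod.map (fun i => weight W (256 ^ i - 1)) fun i => weight W (256 ^ i - 1)))))
        k 20 (T + 2) W (256 ^ k - 1) pending circuits

set_option maxRecDepth 100000 in
theorem checkType_of_mem_types : ∀ k < 9, ∀ C ∈ types k, checkType k C = true := by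
  decide +kernel

end Types

section TypesSoundness

variable {k : ℕ} {C : List (ℕ × ℕ)} {pos : ℕ → ℕ}

theorem length_evenLengths (lo m : ℕ) : (evenLengths lo m).length = 2 * m := by
  induction lo, m using evenLengths.induct with
  | case1 => rfl
  | case2 => rfl
  | case3 lo m ih => simp only [evenLengths, List.length_cons, ih]; omega

/-- `G` has precisely two cycles of each even length up to `n`, and no other cycles. -/
def HasTwoEvenCycles (n : ℕ) {V : Type*} (G : SimpleGraph V) : Prop :=
  ∀ ℓ, 3 ≤ ℓ → cycleCount G ℓ = if ℓ ≤ n ∧ Even ℓ then 2 else 0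

theorem hasTwoEvenCycles_iff_perm {n : ℕ} (hn : 4 ≤ n) (hn' : Even n) {E : List (ℕ × ℕ)}
    (hE : IsSimple n E) {L : List (Finset ℕ)}
    (hL : Enumerates L (IsCircuitIn (edge n E) (range (n + 1 + E.length)))) :
    HasTwoEvenCycles n (trailGraph n E) ↔
      (evenLengths 4 ((n - 2) / 2)).Perm (L.map Finset.card) := by
  rw [HasTwoEvenCycles, List.perm_iff_count]
  refine forall_congr' fun ℓ => ?_
  rw [count_evenLengths, count_card_eq_cycleCount hE hL]
  have hrange : (4 ≤ ℓ ∧ ℓ < 4 + 2 * ((n - 2) / 2) ∧ (ℓ - 4) % 2 = 0) ↔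
      3 ≤ ℓ ∧ ℓ ≤ n ∧ Even ℓ := by
    rw [Nat.even_iff] at hn' ⊢
    omega
  rw [if_congr hrange rfl rfl]
  by_cases hℓ : 3 ≤ ℓ
  · simp only [hℓ, true_and, true_imp_iff, if_true, eq_comm]
  · simp only [hℓ, false_and, false_imp_iff, if_false]

theorem sum_gaps (hpos : Monotone pos) (h0 : pos 0 = 0) (m : ℕ) :
    ∑ i ∈ range m, (pos (i + 1) - pos i) = pos m := by
  rw [sum_range_tsub hpos, h0, tsub_zero]

theorem pack_gaps_sdiff (hk : ∀ t, pos (k + t) = pos k + t) {m : ℕ} (hm : k ≤ m) :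
    pack (fun i => pos (i + 1) - pos i) (range m \ range k) = (256 ^ m - 256 ^ k) / 255 := by
  have hcode : code (range m \ range k) =
      pack (fun i => pos (i + 1) - pos i) (range m \ range k) * 255 := by
    rw [code, pack, pack, sum_mul]
    refine sum_congr rfl fun i hi => ?_
    obtain ⟨t, rfl⟩ := Nat.exists_eq_add_of_le (show k ≤ i by simp at hi; omega)
    rw [add_assoc, hk, hk, ← add_assoc, Nat.add_sub_cancel_left]
    ring
  rw [← Nat.mul_div_left (pack _ _) (show 0 < 255 by norm_num), ← hcode,
    code_sdiff (range_subset_range.mpr hm), code_range, code_range]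
  have := Nat.pow_pos (n := k) (show 0 < 256 by norm_num)
  congr 1
  omega

theorem map_weight_gaps (hpos : Monotone pos) (h0 : pos 0 = 0) {m : ℕ}
    (hgap : ∀ i, pos (i + 1) - pos i < 256) (hm : pos m < 255)
    (hC : ∀ c ∈ C, c.1 ≤ m ∧ c.2 ≤ m) {W : ℕ}
    (hW : W = pack (fun i => pos (i + 1) - pos i) (range m)) :
    C.map (Prod.map (fun i => weight W (256 ^ i - 1)) fun i => weight W (256 ^ i - 1)) =
      C.map (Prod.map pos pos) := by
  have hweight {i : ℕ} (hi : i ≤ m) : weight W (256 ^ i - 1) = pos i := by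
    rw [hW, ← code_range, weight_pack hgap (by rwa [sum_gaps hpos h0]),
      inter_eq_right.mpr (range_subset_range.mpr hi), sum_gaps hpos h0]
  exact List.map_congr_left fun c hc => Prod.ext (hweight (hC c hc).1) (hweight (hC c hc).2)

theorem gap_lt (hpos : Monotone pos) (hk : ∀ t, pos (k + t) = pos k + t) {b : ℕ} (hb : 1 < b)
    (hkb : pos k < b) (i : ℕ) : pos (i + 1) - pos i < b := by
  rcases lt_or_ge i k with hi | hi
  · have := hpos (show i + 1 ≤ k from hi)
    omega
  · obtain ⟨t, rfl⟩ := Nat.exists_eq_add_of_le hi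
    rw [add_assoc, hk, hk]
    omega

theorem checkType_sound (hpos : StrictMono pos) (h0 : pos 0 = 0)
    (hk : ∀ t, pos (k + t) = pos k + t) (hn : 4 ≤ pos k) (hn' : Even (pos k))
    (hC : ∀ c ∈ C, c.1 ≤ k + 1 ∧ c.2 ≤ k + 1)
    (hE : IsSimple (pos k) (C.map (Prod.map pos pos)))
    (h : HasTwoEvenCycles (pos k) (trailGraph (pos k) (C.map (Prod.map pos pos))))
    (hcheck : checkType k C = true) :
    ∃ F ∈ targets (pos k), isTarget (pos k) (C.map (Prod.map pos pos)) F = true := by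
  obtain ⟨L, hcodes, hLm, hL⟩ :=
    encodes_circuitCodes hpos h0 hk (hpos.lt_iff_lt.mp (by omega)) hC
  have hperm := (hasTwoEvenCycles_iff_perm hn hn' hE (by rwa [List.length_map])).mp h
  have hlength : L.length + 2 = pos k := by
    have := hperm.length_eq
    rw [length_evenLengths, List.length_map, List.length_map] at this
    rw [Nat.even_iff] at hn'
    omega
  have heven : Nat.beq (L.length % 2) 1 = false := by
    rw [Nat.even_iff] at hn'
    rw [← Bool.not_eq_true, Nat.beq_eq]
    omega
  have hsum := sum_gaps hpos.monotone h0
  simp only [checkType, forceList_eq, force_eq, kif_eq, hcodes, List.length_map, heven,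
    Bool.false_eq_true, if_false, Bool.and_eq_true, Nat.ble_eq] at hcheck
  obtain ⟨hsmall, hsearch⟩ := hcheck
  have hm : pos (k + 1 + C.length) < 255 := by
    rw [add_assoc, hk]
    omega
  have hgap := gap_lt hpos.monotone hk (by norm_num : 1 < 256) (by omega)
  rw [hlength, ← hsum k, ← code_range, show L.length = pos k - 2 by omega,
    ← pack_gaps_sdiff hk (by omega), hsum k] at hsearch
  have hleaf := search_sound (U := range k) (fun i => Nat.sub_pos_of_lt (hpos (lt_add_one i)))
    hgap (by rwa [hsum]) (by omega) Subset.rfl hLm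
    (hperm.trans (by simp [Function.comp_def, card_expand hpos])) (by rwa [hsum])
  rw [map_weight_gaps hpos.monotone h0 hgap hm
    (fun c hc => ⟨(hC c hc).1.trans (by omega), (hC c hc).2.trans (by omega)⟩) rfl] at hleaf
  exact List.any_eq_true.mp hleaf

end TypesSoundness

section ExistsType

variable {n k : ℕ} {c : ℕ × ℕ} {pos : ℕ → ℕ}

theorem mem_pairs :
    c ∈ pairs k ↔ c.1 < k ∧ c.2 < k + 2 ∧ c.1 < c.2 ∧ c.2 ≠ k ∧ c ≠ (0, k + 1) := by
  have hprod : c ∈ List.range k ×ˢ List.range (k + 2) ↔ c.1 < k ∧ c.2 < k + 2 :=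
    List.mem_product.trans (by simp only [List.mem_range])
  simp only [pairs, List.mem_filter, hprod, Bool.and_eq_true, decide_eq_true_eq, bne_iff_ne,
    and_assoc]

theorem nodup_pairs : (pairs k).Nodup := (List.nodup_range.product List.nodup_range).filter _

theorem mem_types {C : List (ℕ × ℕ)} (hsub : C.Sublist (pairs k)) (hlen : C.length ≤ 4)
    (hcover : ∀ i, 1 ≤ i ∧ i < k ∨ i = k + 1 → ∃ c ∈ C, i = c.1 ∨ i = c.2) : C ∈ types k := by
  simp only [types, covers, List.mem_filter, List.mem_flatMap, List.mem_range, List.mem_sublistsLen,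
    List.all_eq_true, List.mem_cons, List.mem_range'_1, List.any_eq_true, Bool.or_eq_true,
    Nat.beq_eq]
  exact ⟨⟨C.length, by omega, hsub, rfl⟩, fun i hi => hcover i (by omega)⟩

/-- The positions that keep their role when the cycle of length `n` is contracted as far as the
extra edges `X` permit. -/
def IsKept (n : ℕ) (X : List (ℕ × ℕ)) (i : ℕ) : Prop :=
  i = 0 ∨ n ≤ i ∨ ∃ c ∈ X, i = c.1 ∨ i = c.2

variable {X : List (ℕ × ℕ)}

open Classical in
theorem count_isKept_lt (hX : X.length ≤ 4) (hlast : ∃ c ∈ X, c.2 = n + 1) :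
    Nat.count (IsKept n X) n < 9 := by
  obtain ⟨c, hc, hc₂⟩ := hlast
  let ends := (X.map Prod.fst ++ X.map Prod.snd).toFinset
  have hsub : {i ∈ range n | IsKept n X i} ⊆ insert 0 (ends.erase (n + 1)) := by
    intro i hi
    obtain ⟨hin, hi | hi | ⟨d, hd, hi⟩⟩ := mem_filter.mp hi
    · simp [hi]
    · exact absurd hi (mem_range.mp hin).not_ge
    · have hne : i ≠ n + 1 := by have := mem_range.mp hin; omega
      have hends : i ∈ ends := by
        simp only [ends, List.mem_toFinset, List.mem_append, List.mem_map]
        exact hi.imp (fun h => ⟨d, hd, h.symm⟩) fun h => ⟨d, hd, h.symm⟩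
      exact mem_insert_of_mem (mem_erase.mpr ⟨hne, hends⟩)
  have hmem : n + 1 ∈ ends :=
    List.mem_toFinset.mpr (List.mem_append_right _ (List.mem_map.mpr ⟨c, hc, hc₂⟩))
  have hends : #ends ≤ 8 := (List.toFinset_card_le _).trans (by simp; omega)
  calc Nat.count (IsKept n X) n = #{i ∈ range n | IsKept n X i} := Nat.count_eq_card_filter_range ..
    _ ≤ #(ends.erase (n + 1)) + 1 := (card_le_card hsub).trans (card_insert_le _ _)
    _ < 9 := by rw [card_erase_of_mem hmem]; omega

theorem map_mem_pairs_iff (hpos : StrictMono pos) (h0 : pos 0 = 0)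
    (hk : ∀ t, pos (k + t) = n + t) : Prod.map pos pos c ∈ pairs n ↔ c ∈ pairs k := by
  have hn : n = pos k := (hk 0).symm
  have h₁ : pos c.2 = pos k + 1 ↔ c.2 = k + 1 := by rw [← hn, ← hk, hpos.injective.eq_iff]
  have h₂ : pos c.1 = 0 ↔ c.1 = 0 := by
    nth_rw 1 [← h0]
    exact hpos.injective.eq_iff
  rw [mem_pairs, mem_pairs, ← hk 2, hn]
  simp only [Prod.map_fst, Prod.map_snd, hpos.lt_iff_lt, ne_eq, hpos.injective.eq_iff,
    Prod.ext_iff, h₁, h₂]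

open Classical in
theorem map_filter_pairs_perm (hpos : StrictMono pos) (h0 : pos 0 = 0)
    (hk : ∀ t, pos (k + t) = n + t) (hX : X.Nodup) (hXn : ∀ c ∈ X, c ∈ pairs n)
    (hsurj : ∀ i, IsKept n X i → ∃ j, pos j = i) :
    (((pairs k).filter fun c => Prod.map pos pos c ∈ X).map (Prod.map pos pos)).Perm X := by
  refine (List.perm_ext_iff_of_nodup ((nodup_pairs.filter _).map
    (hpos.injective.prodMap hpos.injective)) hX).mpr fun c => ⟨?_, fun hc => ?_⟩
  · simp only [List.mem_map, List.mem_filter, decide_eq_true_eq]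
    rintro ⟨d, hd, rfl⟩
    exact hd.2
  · obtain ⟨i, hi⟩ := hsurj c.1 (.inr (.inr ⟨c, hc, .inl rfl⟩))
    obtain ⟨j, hj⟩ := hsurj c.2 (.inr (.inr ⟨c, hc, .inr rfl⟩))
    obtain rfl : Prod.map pos pos (i, j) = c := Prod.ext hi hj
    exact List.mem_map_of_mem (List.mem_filter.mpr
      ⟨(map_mem_pairs_iff hpos h0 hk).mp (hXn _ hc), decide_eq_true hc⟩)

theorem nth_count_add {p : ℕ → Prop} [DecidablePred p] (hp : ∀ i, n ≤ i → p i) (t : ℕ) :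
    Nat.nth p (Nat.count p n + t) = n + t := by
  have hcount : Nat.count (fun i => p (n + i)) t = t :=
    Nat.count_iff_forall.mpr fun i _ => hp _ (Nat.le_add_right n i)
  nth_rw 1 [← hcount]
  rw [← Nat.count_add, Nat.nth_count (hp _ (Nat.le_add_right n t))]

open Classical in
theorem exists_type_perm (hX : X.Nodup) (hXn : ∀ c ∈ X, c ∈ pairs n) (hlen : X.length ≤ 4)
    (hlast : ∃ c ∈ X, c.2 = n + 1) : ∃ k < 9, ∃ C ∈ types k, ∃ pos : ℕ → ℕ, StrictMono pos ∧
      pos 0 = 0 ∧ (∀ t, pos (k + t) = n + t) ∧ (C.map (Prod.map pos pos)).Perm X := by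
  have hinf : (Set.ofPred (IsKept n X)).Infinite :=
    (Set.Ici_infinite n).mono fun i hi => .inr (.inl hi)
  set pos := Nat.nth (IsKept n X)
  set k := Nat.count (IsKept n X) n
  have hpos : StrictMono pos := Nat.nth_strictMono hinf
  have h0 : pos 0 = 0 := Nat.nth_count (p := IsKept n X) (.inl rfl)
  have hk : ∀ t, pos (k + t) = n + t := nth_count_add fun i hi => .inr (.inl hi)
  have hperm := map_filter_pairs_perm hpos h0 hk hX hXn fun i hi => ⟨_, Nat.nth_count hi⟩
  refine ⟨k, count_isKept_lt hlen hlast, _, mem_types List.filter_sublist ?_ fun i hi => ?_, pos,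
    hpos, h0, hk, hperm⟩
  · simpa using hperm.length_eq.trans_le hlen
  · suffices ∃ c ∈ X, pos i = c.1 ∨ pos i = c.2 by
      obtain ⟨c, hc, hic⟩ := this
      obtain ⟨d, hd, rfl⟩ := List.mem_map.mp (hperm.symm.subset hc)
      exact ⟨d, hd, hic.imp (hpos.injective ·) (hpos.injective ·)⟩
    rcases hi with ⟨hi, hik⟩ | rfl
    · have hi₀ : pos 0 < pos i := hpos hi
      have hin : pos i < pos k := hpos hik
      have hkn : pos k = n := hk 0
      have hkept : IsKept n X (pos i) := Nat.nth_mem_of_infinite hinf i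
      exact (hkept.resolve_left (by omega)).resolve_left (by omega)
    · obtain ⟨c, hc, hcn⟩ := hlast
      exact ⟨c, hc, .inr ((hk 1).trans hcn.symm)⟩

end ExistsType

section CycleCount

variable {V W : Type*} {G : SimpleGraph V} {H : SimpleGraph W} {k n : ℕ}

theorem cycleCount_congr (φ : G ≃g H) (k : ℕ) : cycleCount G k = cycleCount H k := by
  have hinv : Function.LeftInverse (Subgraph.map φ.symm.toHom) (Subgraph.map φ.toHom) := fun K => by
    ext <;> simp [Relation.map_apply]
  have himage : Set.range (Copy.toSubgraph : Copy (cycleGraph k) H → H.Subgraph) =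
      Subgraph.map φ.toHom ''
        Set.range (Copy.toSubgraph : Copy (cycleGraph k) G → G.Subgraph) := by
    ext K
    simp only [Set.mem_range, Set.mem_image, exists_exists_eq_and]
    constructor
    · rintro ⟨c, rfl⟩
      refine ⟨φ.symm.toCopy.comp c, ?_⟩
      rw [Copy.toSubgraph, Copy.toSubgraph, ← Subgraph.map_comp]
      congr 1
      ext v
      simp
    · rintro ⟨c, rfl⟩
      refine ⟨φ.toCopy.comp c, ?_⟩
      rw [Copy.toSubgraph, Copy.toSubgraph, ← Subgraph.map_comp]
      rfl
  rw [cycleCount_eq_ncard_range, cycleCount_eq_ncard_range, himage,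
    Set.ncard_image_of_injective _ hinv.injective]

theorem cycleCount_eq_zero_iff_free [Finite V] : cycleCount G k = 0 ↔ (cycleGraph k).Free G := by
  rw [cycleCount_eq_ncard_range, Set.ncard_eq_zero, Set.range_eq_empty_iff, ← not_nonempty_iff]

theorem cycleCount_eq_zero_of_odd [Finite V] (hG : G.Colorable 2) (hk : 3 ≤ k) (hodd : Odd k) :
    cycleCount G k = 0 := by
  refine cycleCount_eq_zero_iff_free.mpr fun ⟨c⟩ => ?_
  have := (hG.of_hom c.toHom).chromaticNumber_le
  rw [chromaticNumber_cycleGraph_of_odd k (by omega) hodd] at this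
  exact absurd this (by decide)

theorem cycleCount_eq_zero_of_card_lt [Fintype V] (hk : Fintype.card V < k) :
    cycleCount G k = 0 := by
  refine cycleCount_eq_zero_iff_free.mpr fun ⟨c⟩ => hk.not_ge ?_
  simpa using Fintype.card_le_of_injective c c.injective

theorem isOddlyRBipancyclic_two_iff [Fintype V] (hV : Fintype.card V = n + 1) :
    IsOddlyRBipancyclic G 2 ↔
      G.Colorable 2 ∧ Even n ∧ (∀ x, 2 ≤ (G.neighborSet x).ncard) ∧ HasTwoEvenCycles n G := by
  rw [IsOddlyRBipancyclic, hV, Nat.odd_add_one, Nat.not_odd_iff_even, Nat.add_sub_cancel]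
  refine and_congr_right fun hcol => and_congr_right fun hn => and_congr_right fun _ =>
    ⟨fun h ℓ hℓ => ?_, fun h ℓ hℓ hℓn heven => by rw [h ℓ (by omega), if_pos ⟨hℓn, heven⟩]⟩
  rcases ℓ.even_or_odd with heven | hodd
  · split_ifs with hℓn
    · exact h ℓ (by obtain ⟨t, rfl⟩ := heven; omega) hℓn.1 heven
    · refine cycleCount_eq_zero_of_card_lt (hV ▸ ?_)
      obtain ⟨s, rfl⟩ := hn
      obtain ⟨t, rfl⟩ := heven
      by_contra hlt
      exact hℓn ⟨by omega, t, rfl⟩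
  · rw [if_neg fun hℓn => Nat.not_even_iff_odd.mpr hodd hℓn.2,
      cycleCount_eq_zero_of_odd hcol hℓ hodd]

end CycleCount

section Labelling

variable {V : Type*} {G : SimpleGraph V} {n p : ℕ}

theorem vertex_eq_castSucc [NeZero n] (hp : p ≤ n) : vertex n p = (Fin.ofNat n p).castSucc := by
  rw [Fin.ext_iff, vertex_val, Fin.val_castSucc, Fin.val_ofNat]
  split_ifs with h
  · rw [h, Nat.mod_self]
  · rw [min_eq_left hp, Nat.mod_eq_of_lt (by omega)]

theorem cycleGraph_adj_ofNat_succ [NeZero n] (hn : 1 < n) (i : ℕ) (j : Fin n) :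
    (cycleGraph n).Adj (Fin.ofNat n i + j) (Fin.ofNat n (i + 1) + j) := by
  rw [cycleGraph_adj', add_sub_add_right_eq_sub, add_sub_add_right_eq_sub]
  have hsucc : Fin.ofNat n (i + 1) = Fin.ofNat n i + 1 := by
    ext
    simp [Fin.val_add]
  rw [hsucc, add_sub_cancel_left]
  exact .inr (Nat.mod_eq_of_lt hn)

/-- Number the vertices along a cycle of length `n`, starting next to the remaining vertex. -/
theorem exists_iso_of_cycleCount_ne_zero [Fintype V] (hV : Fintype.card V = n + 1) (hn : 1 < n)
    (hcycle : cycleCount G n ≠ 0) (hG : ∀ x, ∃ y, G.Adj x y) :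
    ∃ H : SimpleGraph (Fin (n + 1)), Nonempty (G ≃g H) ∧ ∀ e ∈ edges n [], e ∈ H.edgeSet := by
  obtain ⟨c⟩ := not_not.mp (mt cycleCount_eq_zero_iff_free.mpr hcycle)
  have : NeZero n := ⟨by omega⟩
  obtain ⟨x, hx⟩ : ∃ x, x ∉ Set.range c := by
    by_contra! hsurj
    have := Fintype.card_le_of_surjective c hsurj
    simp [hV] at this
  have hbij {d : Fin n → V} (hd : d.Injective) (hxd : x ∉ Set.range d) :
      Function.Bijective (Fin.snoc d x : Fin (n + 1) → V) := by
    rw [Fintype.bijective_iff_injective_and_card, hV, Fintype.card_fin]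
    exact ⟨Fin.snoc_injective_iff.mpr ⟨hd, hxd⟩, rfl⟩
  obtain ⟨y, hxy⟩ := hG x
  obtain ⟨j, rfl⟩ : ∃ j, c j = y := by
    obtain ⟨j, rfl⟩ := (hbij c.injective hx).2 y
    induction j using Fin.lastCases with
    | last => simp at hxy
    | cast j => exact ⟨j, by simp⟩
  let d (i : Fin n) : V := c (i + j)
  have hd : d.Injective := fun a b hab => add_right_cancel (c.injective hab)
  have hxd : x ∉ Set.range d := fun ⟨i, hi⟩ => hx ⟨i + j, hi⟩
  refine ⟨G.comap (Fin.snoc d x), ⟨(Iso.comap (.ofBijective _ (hbij hd hxd)) G).symm⟩, ?_⟩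
  simp only [edges, List.append_nil, List.mem_map, List.mem_range]
  rintro _ ⟨_, ⟨i, hi, rfl⟩, rfl⟩
  rw [mem_edgeSet, comap_adj]
  rcases (Nat.lt_succ_iff.mp hi).lt_or_eq with hi | rfl
  · rw [vertex_eq_castSucc hi.le, vertex_eq_castSucc hi, Fin.snoc_castSucc, Fin.snoc_castSucc]
    exact c.toHom.map_adj (cycleGraph_adj_ofNat_succ hn i j)
  · have hlast : vertex i (i + 1) = Fin.last i := Fin.ext vertex_last
    rw [hlast, vertex_eq_castSucc le_rfl, Fin.snoc_castSucc, Fin.snoc_last]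
    simpa [d] using hxy.symm

end Labelling

section Extras

variable {n : ℕ} {E F : List (ℕ × ℕ)} {H : SimpleGraph (Fin (n + 1))}

theorem exists_pair_of_lt {x y : Fin (n + 1)} (hxy : x < y) :
    ∃ c ∈ (0, n + 1) :: pairs n, s(vertex n c.1, vertex n c.2) = s(x, y) := by
  refine ⟨(x, if (y : ℕ) = n then n + 1 else y), ?_, ?_⟩
  · rw [List.mem_cons, or_iff_not_imp_left, mem_pairs]
    intro hne
    exact ⟨by omega, by dsimp only; split_ifs <;> omega, by dsimp only; split_ifs <;> omega,
      by dsimp only; split_ifs <;> omega, hne⟩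
  · congr 2 <;> rw [Fin.ext_iff, vertex_val] <;> dsimp only <;> split_ifs <;> omega

theorem mk_vertex_injOn_pairs :
    Set.InjOn (fun c : ℕ × ℕ => s(vertex n c.1, vertex n c.2)) {c | c ∈ pairs n} := by
  intro c hc d hd h
  obtain ⟨hc₁, hc₂, hc, hcn, -⟩ := mem_pairs.mp hc
  obtain ⟨hd₁, hd₂, hd, hdn, -⟩ := mem_pairs.mp hd
  simp only [Sym2.eq_iff, Fin.ext_iff, vertex_val] at h
  ext <;> split_ifs at h <;> omega

theorem isSimple_nil (hn : 3 ≤ n) : IsSimple n [] := by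
  simp only [IsSimple, edges, List.append_nil, List.map_map, List.mem_map, List.mem_range]
  constructor
  · refine List.nodup_range.map_on fun i hi j hj h => ?_
    simp only [List.mem_range, Function.comp_apply, Sym2.eq_iff, Fin.ext_iff, vertex_val]
      at hi hj h
    split_ifs at h <;> omega
  · rintro _ ⟨i, hi, rfl⟩ h
    simp only [Function.comp_apply, Sym2.mk_isDiag_iff, Fin.ext_iff, vertex_val] at h
    split_ifs at h <;> omega

theorem edges_eq_append :
    edges n E = edges n [] ++ E.map fun c => s(vertex n c.1, vertex n c.2) := by
  simp [edges]

open Classical in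
theorem exists_trailGraph_eq (hn : 3 ≤ n) (hH : ∀ e ∈ edges n [], e ∈ H.edgeSet) :
    ∃ E, IsSimple n E ∧ E.Nodup ∧ (∀ c ∈ E, c ∈ pairs n) ∧ trailGraph n E = H := by
  let E := (pairs n).filter fun c =>
    s(vertex n c.1, vertex n c.2) ∈ H.edgeSet ∧ s(vertex n c.1, vertex n c.2) ∉ edges n []
  have hmem {c : ℕ × ℕ} : c ∈ E ↔ c ∈ pairs n ∧ s(vertex n c.1, vertex n c.2) ∈ H.edgeSet ∧
      s(vertex n c.1, vertex n c.2) ∉ edges n [] := by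
    rw [List.mem_filter, decide_eq_true_iff]
  have hE : E.Nodup := nodup_pairs.filter _
  have hedges {e : Sym2 (Fin (n + 1))} : e ∈ edges n E ↔ e ∈ H.edgeSet := by
    rw [edges_eq_append, List.mem_append, List.mem_map]
    constructor
    · rintro (he | ⟨c, hc, rfl⟩)
      · exact hH e he
      · exact (hmem.mp hc).2.1
    · refine fun he => or_iff_not_imp_left.mpr fun hnot => ?_
      obtain ⟨c, hc, rfl⟩ : ∃ c ∈ (0, n + 1) :: pairs n, s(vertex n c.1, vertex n c.2) = e := by
        induction e with
        | _ x y =>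
        rcases lt_or_gt_of_ne (H.ne_of_adj he) with hxy | hxy
        · exact exists_pair_of_lt hxy
        · exact Sym2.eq_swap (a := x) ▸ exists_pair_of_lt hxy
      rcases List.mem_cons.mp hc with rfl | hc
      · refine absurd (List.mem_map.mpr ⟨(n, n + 1), by simp, ?_⟩) hnot
        rw [vertex_self, show vertex n 0 = 0 from Fin.ext (vertex_val_of_lt (by omega))]
      · exact ⟨c, hmem.mpr ⟨hc, he, hnot⟩, rfl⟩
  refine ⟨E, ⟨?_, fun e he => H.not_isDiag_of_mem_edgeSet (hedges.mp he)⟩, hE,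
    fun c hc => (hmem.mp hc).1, ?_⟩
  · rw [edges_eq_append]
    refine (isSimple_nil hn).1.append (hE.map_on fun c hc d hd h =>
      mk_vertex_injOn_pairs (hmem.mp hc).1 (hmem.mp hd).1 h) ?_
    rintro _ he hextra
    obtain ⟨c, hc, rfl⟩ := List.mem_map.mp hextra
    exact (hmem.mp hc).2.2 he
  · rw [trailGraph, ← fromEdgeSet_edgeSet H]
    exact congrArg fromEdgeSet (Set.ext fun e => hedges)

theorem edges_perm (h : E.Perm F) : (edges n E).Perm (edges n F) := (h.append_left _).map _

theorem trailGraph_congr (h : E.Perm F) : trailGraph n E = trailGraph n F := by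
  simp only [trailGraph, (edges_perm h).mem_iff]

theorem isSimple_congr (h : E.Perm F) : IsSimple n E ↔ IsSimple n F := by
  simp only [IsSimple, (edges_perm h).mem_iff, (edges_perm h).nodup_iff]

theorem exists_snd_eq_of_one_lt_degree (hE : ∀ c ∈ E, c ∈ pairs n)
    (hdeg : 1 < ((trailGraph n E).neighborSet (Fin.last n)).ncard) : ∃ c ∈ E, c.2 = n + 1 := by
  obtain ⟨y, hy, hy₀⟩ := Set.exists_ne_of_one_lt_ncard hdeg 0
  obtain ⟨hmem, -⟩ := (fromEdgeSet_adj _).mp hy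
  simp only [edges, List.mem_map, List.mem_append, List.mem_range] at hmem
  obtain ⟨c, ⟨i, hi, rfl⟩ | hc, h⟩ := hmem
  · simp only [Sym2.eq_iff, Fin.ext_iff, vertex_val, Fin.val_last, Fin.val_zero, Ne] at h hy₀
    split_ifs at h <;> omega
  · obtain ⟨h₁, h₂, h₁₂, h₃, -⟩ := mem_pairs.mp (hE c hc)
    refine ⟨c, hc, ?_⟩
    simp only [Sym2.eq_iff, Fin.ext_iff, vertex_val, Fin.val_last] at h
    split_ifs at h <;> omega

end Extras

section Completeness

variable {V : Type*} [Fintype V] {G : SimpleGraph V} {n : ℕ}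

theorem five_le_card (hG : G.Colorable 2) (hodd : Odd (Fintype.card V))
    (hdeg : ∀ x, 2 ≤ (G.neighborSet x).ncard) : 5 ≤ Fintype.card V := by
  classical
  obtain ⟨C⟩ := hG
  have hcolor {u v : V} (huv : G.Adj u v) : C u ≠ C v := C.valid huv
  obtain ⟨x⟩ : Nonempty V := Fintype.card_pos_iff.mp hodd.pos
  obtain ⟨y, hy⟩ := Set.nonempty_of_ncard_ne_zero (s := G.neighborSet x) (by have := hdeg x; omega)
  obtain ⟨z, hz, hzy⟩ := Set.exists_ne_of_one_lt_ncard (hdeg x) y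
  obtain ⟨w, hw, hwx⟩ := Set.exists_ne_of_one_lt_ncard (hdeg y) x
  have hxy := hcolor hy
  have hxz := hcolor hz
  have hyw := hcolor hw
  have hzw : z ≠ w := by rintro rfl; omega
  have hfour : #{x, y, z, w} = 4 := by
    rw [card_insert_of_notMem, card_insert_of_notMem, card_pair hzw] <;>
      simp [hy.ne, hz.ne, hw.ne, hzy.symm, hwx.symm]
  have := hfour ▸ card_le_univ {x, y, z, w}
  obtain ⟨t, ht⟩ := hodd
  omega

theorem exists_iso_trailGraph (hV : Fintype.card V = n + 1) (hG : IsOddlyRBipancyclic G 2)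
    (hcard : G.edgeSet.ncard ≤ n + 5) :
    ∃ E, IsSimple n E ∧ E.Nodup ∧ (∀ c ∈ E, c ∈ pairs n) ∧ E.length ≤ 4 ∧
      (∃ c ∈ E, c.2 = n + 1) ∧ Nonempty (G ≃g trailGraph n E) := by
  have := five_le_card hG.1 hG.2.1 hG.2.2.1
  obtain ⟨-, heven, hdeg, hcycles⟩ := (isOddlyRBipancyclic_two_iff hV).mp hG
  obtain ⟨H, ⟨φ⟩, hH⟩ := exists_iso_of_cycleCount_ne_zero hV (by omega)
    (by rw [hcycles n (by omega), if_pos ⟨le_rfl, heven⟩]; norm_num)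
    fun x => Set.nonempty_of_ncard_ne_zero (s := G.neighborSet x) (by have := hdeg x; omega)
  obtain ⟨E, hE, hnodup, hpairs, rfl⟩ := exists_trailGraph_eq (by omega) hH
  refine ⟨E, hE, hnodup, hpairs, ?_, exists_snd_eq_of_one_lt_degree hpairs ?_, ⟨φ⟩⟩
  · have := ncard_edgeSet_trailGraph hE
    have := Nat.card_congr φ.mapEdgeSet
    simp only [Nat.card_coe_set_eq] at this
    omega
  · have := Nat.card_congr (φ.symm.mapNeighborSet (Fin.last n))
    simp only [Nat.card_coe_set_eq] at this
    exact this ▸ hdeg _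

theorem exists_target (hV : Fintype.card V = n + 1) (hG : IsOddlyRBipancyclic G 2)
    (hcard : G.edgeSet.ncard ≤ n + 5) :
    ∃ F ∈ targets n, ∃ E, IsSimple n E ∧ isTarget n E F = true ∧
      Nonempty (G ≃g trailGraph n E) := by
  have hn := five_le_card hG.1 hG.2.1 hG.2.2.1
  obtain ⟨-, heven, -, hcycles⟩ := (isOddlyRBipancyclic_two_iff hV).mp hG
  obtain ⟨E, hE, hnodup, hpairs, hlength, hend, ⟨φ⟩⟩ := exists_iso_trailGraph hV hG hcard
  obtain ⟨k, hk, C, hC, pos, hpos, h0, hpos_add, hperm⟩ :=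
    exists_type_perm hnodup hpairs hlength hend
  obtain rfl : pos k = n := hpos_add 0
  have hlast : pos k + 1 = pos (k + 1) := (hpos_add 1).symm
  have hle (c) (hc : c ∈ C) : c.1 ≤ k + 1 ∧ c.2 ≤ k + 1 := by
    obtain ⟨h₁, h₂, -⟩ := mem_pairs.mp (hpairs _ (hperm.subset (List.mem_map_of_mem hc)))
    exact ⟨(hpos.lt_iff_lt.mp h₁).le.trans k.le_succ,
      hpos.le_iff_le.mp (hlast ▸ Nat.lt_succ_iff.mp h₂)⟩
  rw [← isSimple_congr hperm] at hE
  rw [← trailGraph_congr hperm] at φ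
  obtain ⟨F, hF, htarget⟩ := checkType_sound hpos h0 hpos_add (by omega) heven hle hE
    (fun ℓ hℓ => by rw [← cycleCount_congr φ, hcycles ℓ hℓ]) (checkType_of_mem_types k hk C hC)
  exact ⟨F, hF, _, hE, htarget, ⟨φ⟩⟩

end Completeness

section WalkCount

variable {V W : Type*} [Fintype V] [Fintype W]

open Classical in
/-- The number of walks of length `r` from `x`. -/
noncomputable def walkCount (G : SimpleGraph V) : ℕ → V → ℕ
  | 0, _ => 1
  | r + 1, x => ∑ y with G.Adj x y, walkCount G r y

theorem walkCount_congr {G : SimpleGraph V} {H : SimpleGraph W} (φ : G ≃g H) (r : ℕ) (x : V) :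
    walkCount G r x = walkCount H r (φ x) := by
  induction r generalizing x with
  | zero => rfl
  | succ r ih =>
    classical
    simp only [walkCount, sum_filter]
    exact Fintype.sum_equiv φ.toEquiv _ _ fun y =>
      if_congr φ.map_adj_iff.symm (ih y) rfl

theorem sum_walkCount_congr {G : SimpleGraph V} {H : SimpleGraph W} (φ : G ≃g H) (r : ℕ) :
    ∑ x, walkCount G r x = ∑ x, walkCount H r x :=
  Fintype.sum_equiv φ.toEquiv _ _ (walkCount_congr φ r)

theorem sum_ite_mk_mem [DecidableEq V] {ι : Type*} {L : List ι} {a b : ι → V}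
    (hL : (L.map fun i => s(a i, b i)).Nodup) (hdiag : ∀ i ∈ L, a i ≠ b i) (f : V → ℕ) (x : V) :
    (∑ y, if s(x, y) ∈ L.map fun i => s(a i, b i) then f y else 0) =
      (L.map fun i => if a i = x then f (b i) else if b i = x then f (a i) else 0).sum := by
  induction L with
  | nil => simp
  | cons i L ih =>
    simp only [List.map_cons, List.nodup_cons] at hL
    have hsplit (y : V) : (if s(x, y) ∈ (i :: L).map fun i => s(a i, b i) then f y else 0) =
        (if s(x, y) = s(a i, b i) then f y else 0) +
          if s(x, y) ∈ L.map fun i => s(a i, b i) then f y else 0 := by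
      by_cases h : s(x, y) = s(a i, b i)
      · simp only [List.map_cons, h, List.mem_cons, true_or, if_true, if_neg hL.1, add_zero]
      · simp only [List.map_cons, List.mem_cons, h, false_or, if_false, zero_add]
    have hhead : (∑ y, if s(x, y) = s(a i, b i) then f y else 0) =
        if a i = x then f (b i) else if b i = x then f (a i) else 0 := by
      have hab := hdiag i List.mem_cons_self
      split_ifs with ha hb
      · subst ha
        simp [hab]
      · subst hb
        simp [hab.symm]
      · simp [Ne.symm ha, Ne.symm hb]
    rw [sum_congr rfl fun y _ => hsplit y, sum_add_distrib, hhead, List.map_cons, List.sum_cons,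
      ih hL.2 fun j hj => hdiag j (List.mem_cons_of_mem _ hj)]

/-- The list of the numbers `walkCount (trailGraph n E) r x`. -/
def walkCounts (n : ℕ) (E : List (ℕ × ℕ)) : ℕ → List ℕ
  | 0 => List.replicate (n + 1) 1
  | r + 1 => forceList (walkCounts n E r) fun w => (List.finRange (n + 1)).map fun x =>
      (((List.range (n + 1)).map (fun i => (i, i + 1)) ++ E).map fun c : ℕ × ℕ =>
        if vertex n c.1 = x then w.getD (vertex n c.2) 0
        else if vertex n c.2 = x then w.getD (vertex n c.1) 0 else 0).sum

variable {n : ℕ} {E : List (ℕ × ℕ)}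

theorem walkCounts_eq (hE : IsSimple n E) (r : ℕ) :
    walkCounts n E r = (List.finRange (n + 1)).map (walkCount (trailGraph n E) r) := by
  induction r with
  | zero =>
    change List.replicate (n + 1) 1 = (List.finRange (n + 1)).map fun _ => 1
    rw [List.map_const', List.length_finRange]
  | succ r ih =>
    classical
    rw [walkCounts, forceList_eq]
    refine List.map_congr_left fun x _ => ?_
    have hget (v : Fin (n + 1)) : (walkCounts n E r).getD v 0 = walkCount (trailGraph n E) r v := by
      rw [ih, List.getD_eq_getElem _ _ (by simp; omega), List.getElem_map, List.getElem_finRange]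
      rfl
    simp only [hget]
    rw [← sum_ite_mk_mem hE.1 fun c hc h => hE.2 _ (List.mem_map_of_mem hc) h, walkCount,
      sum_filter]
    refine sum_congr rfl fun y _ => if_congr ?_ rfl rfl
    rw [trailGraph, fromEdgeSet_adj]
    exact ⟨fun h => ⟨h, fun hxy => hE.2 _ h hxy⟩, fun h => h.1⟩

theorem sum_walkCounts (hE : IsSimple n E) (r : ℕ) :
    (walkCounts n E r).sum = ∑ x, walkCount (trailGraph n E) r x := by
  rw [walkCounts_eq hE, Fin.sum_univ_def]

end WalkCount

section Soundness

variable {n : ℕ} {E : List (ℕ × ℕ)}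

theorem colorable_two_trailGraph (hn : 0 < n) (heven : Even n)
    (hE : ∀ c ∈ E, c.1 ≤ n + 1 ∧ c.2 ≤ n + 1 ∧ Odd (c.1 + c.2)) :
    (trailGraph n E).Colorable 2 := by
  let color (v : Fin (n + 1)) : Fin 2 := Fin.ofNat 2 (if (v : ℕ) = n then 1 else v)
  have hcolor {p : ℕ} (hp : p ≤ n + 1) : (color (vertex n p) : ℕ) = p % 2 := by
    rw [Nat.even_iff] at heven
    simp only [color, Fin.val_ofNat, vertex_val]
    split_ifs <;> omega
  have hodd {c : ℕ × ℕ} (h₁ : c.1 ≤ n + 1) (h₂ : c.2 ≤ n + 1) (hc : Odd (c.1 + c.2)) :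
      color (vertex n c.1) ≠ color (vertex n c.2) := by
    rw [Ne, Fin.ext_iff, hcolor h₁, hcolor h₂]
    rw [Nat.odd_iff] at hc
    omega
  refine ⟨Coloring.mk color fun {x y} hxy => ?_⟩
  obtain ⟨hmem, -⟩ := (fromEdgeSet_adj _).mp hxy
  simp only [edges, List.mem_map, List.mem_append, List.mem_range] at hmem
  obtain ⟨c, hc, h⟩ := hmem
  have hne : color (vertex n c.1) ≠ color (vertex n c.2) := by
    rcases hc with ⟨i, hi, rfl⟩ | hc
    · exact hodd (by omega) (by omega) ⟨i, by ring⟩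
    · exact hodd (hE c hc).1 (hE c hc).2.1 (hE c hc).2.2
  rcases Sym2.eq_iff.mp h with ⟨rfl, rfl⟩ | ⟨rfl, rfl⟩
  · exact hne
  · exact hne.symm

theorem adj_vertex_succ {p : ℕ} (hn : 1 < n) (hp : p ≤ n) :
    (trailGraph n E).Adj (vertex n p) (vertex n (p + 1)) := by
  refine (fromEdgeSet_adj _).mpr ⟨List.mem_map.mpr ⟨(p, p + 1), List.mem_append_left _
    (List.mem_map_of_mem (List.mem_range.mpr (by omega))), rfl⟩, ?_⟩
  rw [Ne, Fin.ext_iff, vertex_val, vertex_val]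
  split_ifs <;> omega

theorem two_le_ncard_neighborSet_trailGraph (hn : 3 ≤ n)
    (hE : ∃ c ∈ E, c.2 = n + 1 ∧ c.1 ∈ Ioo 0 n) (x : Fin (n + 1)) :
    2 ≤ ((trailGraph n E).neighborSet x).ncard := by
  obtain ⟨⟨i, -⟩, hc, rfl, hi⟩ := hE
  rw [mem_Ioo] at hi
  have hextra : (trailGraph n E).Adj (vertex n i) (vertex n (n + 1)) := by
    refine (fromEdgeSet_adj _).mpr
      ⟨List.mem_map.mpr ⟨(i, n + 1), List.mem_append_right _ hc, rfl⟩, ?_⟩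
    rw [Ne, Fin.ext_iff, vertex_val, vertex_val]
    split_ifs <;> omega
  have htrail {p : ℕ} (hp : p ≤ n) := adj_vertex_succ (E := E) (by omega : 1 < n) hp
  have htwo {p q r : ℕ} (hq : (trailGraph n E).Adj (vertex n q) (vertex n p))
      (hr : (trailGraph n E).Adj (vertex n p) (vertex n r))
      (hx : (vertex n p : ℕ) = x) (hqr : (vertex n q : ℕ) ≠ vertex n r) :
      1 < ((trailGraph n E).neighborSet x).ncard := by
    obtain rfl := Fin.ext hx
    exact (Set.one_lt_ncard_iff (Set.toFinite _)).mpr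
      ⟨_, _, hq.symm, hr, fun h => hqr (congrArg Fin.val h)⟩
  rcases (Nat.lt_succ_iff.mp x.isLt).lt_or_eq with hx | hx
  · rcases (x : ℕ).eq_zero_or_pos with h0 | h0
    · have hzero : vertex n n = vertex n 0 := by simp [vertex_self, Fin.ext_iff, vertex_val]
      obtain ⟨m, rfl⟩ : ∃ m, n = m + 1 := ⟨n - 1, by omega⟩
      refine htwo (p := 0) (hzero ▸ htrail (p := m) (by omega)) (htrail (by omega)) ?_ ?_ <;>
        simp only [vertex_val] <;> split_ifs <;> omega
    · obtain ⟨m, hm⟩ : ∃ m, (x : ℕ) = m + 1 := ⟨x - 1, by omega⟩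
      refine htwo (htrail (p := m) (by omega)) (htrail (by omega)) ?_ ?_ <;>
        simp only [vertex_val] <;> split_ifs <;> omega
  · refine htwo (htrail le_rfl) hextra.symm ?_ ?_ <;>
      simp only [vertex_val] <;> split_ifs <;> omega

instance : Decidable (IsSimple n E) := inferInstanceAs (Decidable (_ ∧ _))

theorem code_div_mod {A : Finset ℕ} (hA : #A < 255) : code A / 255 % 255 = #A := by
  have hcode : code A = pack (fun _ => 1) A * 255 := by
    simp only [code, pack, sum_mul]
    exact sum_congr rfl fun i _ => by ring
  rw [hcode, Nat.mul_div_cancel _ (by norm_num), pack_mod, sum_const, smul_eq_mul, mul_one,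
    Nat.mod_eq_of_lt hA]

theorem hasTwoEvenCycles_of_perm (hn : 4 ≤ n) (heven : Even n) (hE : IsSimple n E)
    (hsmall : n + 1 + E.length < 255) (hle : ∀ c ∈ E, c.1 ≤ n + 1 ∧ c.2 ≤ n + 1)
    (hperm : (evenLengths 4 ((n - 2) / 2)).Perm ((circuitCodes n E).map (· / 255 % 255))) :
    HasTwoEvenCycles n (trailGraph n E) := by
  obtain ⟨L, hcodes, hLm, hL⟩ :=
    encodes_circuitCodes (pos := id) strictMono_id rfl (fun _ => rfl) (by omega) hle
  have hexpand (S : Finset ℕ) : expand id S = S := by ext; simp [expand]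
  simp only [funext hexpand, List.map_id', Prod.map_id, List.map_id] at hL
  refine (hasTwoEvenCycles_iff_perm hn heven hE hL).mpr (hperm.trans (.of_eq ?_))
  rw [hcodes, List.map_map]
  exact List.map_congr_left fun S hS =>
    code_div_mod ((card_le_card (hLm S hS)).trans_lt (by rwa [card_range]))

end Soundness

section Classification

variable {n : ℕ}

theorem targets_spec : ∀ n ∈ [8, 14, 20, 24], ∀ F ∈ targets n, F.length ≤ 4 ∧ IsSimple n F ∧
    (∀ c ∈ F, c.1 ≤ n + 1 ∧ c.2 ≤ n + 1 ∧ Odd (c.1 + c.2)) ∧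
    (∃ c ∈ F, c.2 = n + 1 ∧ c.1 ∈ Ioo 0 n) ∧
    (evenLengths 4 ((n - 2) / 2)).Perm ((circuitCodes n F).map (· / 255 % 255)) := by
  decide +kernel

theorem nodup_sum_walkCounts_targets : ∀ n ∈ [8, 14, 20, 24],
    ((targets n).map fun F => (walkCounts n F 5).sum).Nodup := by
  decide +kernel

theorem mem_of_mem_targets {F : List (ℕ × ℕ)} (hF : F ∈ targets n) : n ∈ [8, 14, 20, 24] := by
  unfold targets at hF
  split at hF <;> simp_all

theorem isSimple_of_mem_targets {F : List (ℕ × ℕ)} (hF : F ∈ targets n) : IsSimple n F :=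
  (targets_spec n (mem_of_mem_targets hF) F hF).2.1

theorem isOddlyRBipancyclic_of_mem_targets {F : List (ℕ × ℕ)} (hF : F ∈ targets n) :
    IsOddlyRBipancyclic (trailGraph n F) 2 := by
  have hn := mem_of_mem_targets hF
  have hrange : 8 ≤ n ∧ n ≤ 24 ∧ Even n := by
    clear hF
    revert n
    decide
  obtain ⟨hn, hn', heven⟩ := hrange
  obtain ⟨hlength, hF, hodd, hlast, hperm⟩ := targets_spec n (mem_of_mem_targets hF) F hF
  exact (isOddlyRBipancyclic_two_iff (Fintype.card_fin _)).mpr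
    ⟨colorable_two_trailGraph (by omega) heven hodd, heven,
      two_le_ncard_neighborSet_trailGraph (by omega) hlast,
      hasTwoEvenCycles_of_perm (by omega) heven hF (by omega)
        (fun c hc => ⟨(hodd c hc).1, (hodd c hc).2.1⟩) hperm⟩

theorem eq_of_iso_of_mem_targets {i j : Fin (targets n).length}
    (φ : trailGraph n ((targets n).get i) ≃g trailGraph n ((targets n).get j)) : i = j := by
  have hi := List.get_mem (targets n) i
  have hj := List.get_mem (targets n) j
  have hsum := sum_walkCount_congr φ 5
  rw [← sum_walkCounts (isSimple_of_mem_targets hi), ← sum_walkCounts (isSimple_of_mem_targets hj)]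
    at hsum
  have hinj := nodup_sum_walkCounts_targets n (mem_of_mem_targets hi)
  rw [Fin.ext_iff, ← hinj.getElem_inj_iff (hi := by simp) (hj := by simp)]
  simpa using hsum

theorem exists_iso_target {V : Type*} [Fintype V] {G : SimpleGraph V}
    (hV : Fintype.card V = n + 1) (hG : IsOddlyRBipancyclic G 2)
    (hcard : G.edgeSet.ncard ≤ n + 5) : ∃ F ∈ targets n, Nonempty (G ≃g trailGraph n F) := by
  obtain ⟨F, hF, E, hE, htarget, ⟨φ⟩⟩ := exists_target hV hG hcard
  obtain ⟨ψ⟩ := nonempty_iso_of_isTarget hE (isSimple_of_mem_targets hF) htarget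
  exact ⟨F, hF, ⟨φ.trans ψ⟩⟩

theorem exactlyNUpToIso_two_targets (n : ℕ) :
    ExactlyNUpToIso 2 (targets n).length (n + 1) (n + 5) := by
  refine ⟨fun i => trailGraph n ((targets n).get i),
    fun i j hij => ⟨fun φ => hij (eq_of_iso_of_mem_targets φ)⟩, fun i => ?_, ?_⟩
  · have hi := List.get_mem (targets n) i
    refine ⟨isOddlyRBipancyclic_of_mem_targets hi, ?_⟩
    have hlength := (targets_spec n (mem_of_mem_targets hi) _ hi).1
    rw [ncard_edgeSet_trailGraph (isSimple_of_mem_targets hi)]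
    omega
  · intro W _ G hW hcard hG
    obtain ⟨F, hF, φ⟩ := exists_iso_target hW hG hcard
    obtain ⟨i, rfl⟩ := List.get_of_mem hF
    exact ⟨i, φ⟩

theorem card_mem_of_isOddlyRBipancyclic {V : Type*} [Fintype V] {G : SimpleGraph V}
    (hG : IsOddlyRBipancyclic G 2) (hcard : G.edgeSet.ncard ≤ Fintype.card V + 4) :
    Fintype.card V ∈ ({9, 15, 21, 25} : Set ℕ) := by
  obtain ⟨n, hn⟩ := Nat.exists_eq_add_one.mpr hG.2.1.pos
  obtain ⟨F, hF, -⟩ := exists_iso_target hn hG (by omega)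
  have := mem_of_mem_targets hF
  simp_all

end Classification

end OddBipancyclic

theorem oddly_2_bipancyclic_classification :
    (ExactlyNUpToIso 2 2 9 13 ∧
    ExactlyNUpToIso 2 3 15 19 ∧
    ExactlyNUpToIso 2 8 21 25 ∧
    ExactlyNUpToIso 2 4 25 29) ∧
    (∀ (V : Type) [Fintype V] (G : SimpleGraph V),
      IsOddlyRBipancyclic G 2 → G.edgeSet.ncard ≤ Fintype.card V + 4 →
      Fintype.card V ∈ ({9, 15, 21, 25} : Set ℕ)) := by
  exact ⟨⟨OddBipancyclic.exactlyNUpToIso_two_targets 8,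
    OddBipancyclic.exactlyNUpToIso_two_targets 14, OddBipancyclic.exactlyNUpToIso_two_targets 20,
    OddBipancyclic.exactlyNUpToIso_two_targets 24⟩,
    fun _ _ _ => OddBipancyclic.card_mem_of_isOddlyRBipancyclic⟩
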